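/- arXiv:2010.07364 — 3 statements merged into one kernel-verified Lean document; each statement's English description precedes it below -/
import Mathlib

section
/- Fix an odd prime p and integers n, k ≥ 1. Define the finite sequence β_n^k of rationals of length 2^n recursively by: β_1^k = (1/p^k, 1/p^k), and if β_n^k = (b_0, b_1, …, b_{2^n−1}), then β_{n+1}^k = (b_0, 1/p^k, −b_1, −1/p^k, b_2, 1/p^k, …, (−1)^i b_i, (−1)^i/p^k, …, −b_{2^n−1}, −1/p^k) (i.e., the entries of β_{n+1}^k in positions 2i and 2i+1 are (−1)^i b_i and (−1)^i/p^k for 0 ≤ i ≤ 2^n−1). Let (A_j), (B_j) be the continuant sequences of β_n^k. Then B_{2^n−1} = 1/p^{k(2^n−1)} (so its prime-to-p numerator is 1), and the archimedean absolute value satisfies |A_{2^n−1}/A_{2^n−2}|_∞ > 4/p. In particular β_n^k is a nice BCF. -/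
/-- `A`, `B` are the continuant (convergent numerator/denominator) sequences of
the continued fraction with partial quotients `a`:
`A (−1) = 1`, `A 0 = a 0`, `A n = a n * A (n−1) + A (n−2)`, and
`B (−1) = 0`, `B 0 = 1`, `B n = a n * B (n−1) + B (n−2)`. -/
def IsContinuants (a : ℕ → ℚ) (A B : ℤ → ℚ) : Prop :=
  A (-1) = 1 ∧ A 0 = a 0 ∧ B (-1) = 0 ∧ B 0 = 1 ∧
  ∀ n : ℕ, 1 ≤ n → (A n = a n * A ((n : ℤ) - 1) + A ((n : ℤ) - 2) ∧
    B n = a n * B ((n : ℤ) - 1) + B ((n : ℤ) - 2))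

/-- The integer numerator sequence `Ã` of the convergent numerators of a finite
BCF with partial quotients `a_i = ta_i / p^(kk_i)`, shifted by one:
`niceAt p ta kk (n+1) = Ã_n`, with `Ã_{−1} = 1`, `Ã_0 = ta_0` and
`Ã_n = ta_n·Ã_{n−1} + p^(kk_n + kk_{n−1})·Ã_{n−2}`. -/
def niceAt (p : ℕ) (ta : ℕ → ℤ) (kk : ℕ → ℕ) : ℕ → ℤ
  | 0 => 1
  | 1 => ta 0
  | (n + 2) => ta (n + 1) * niceAt p ta kk (n + 1)
      + (p : ℤ) ^ (kk (n + 1) + kk n) * niceAt p ta kk n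

/-- The integer numerator sequence `B̃` of the convergent denominators, shifted
by one: `niceBt p ta kk (n+1) = B̃_n`, with `B̃_{−1} = 0`, `B̃_0 = 1` and
`B̃_n = ta_n·B̃_{n−1} + p^(kk_n + kk_{n−1})·B̃_{n−2}`. -/
def niceBt (p : ℕ) (ta : ℕ → ℤ) (kk : ℕ → ℕ) : ℕ → ℤ
  | 0 => 0
  | 1 => 1
  | (n + 2) => ta (n + 1) * niceBt p ta kk (n + 1)
      + (p : ℤ) ^ (kk (n + 1) + kk n) * niceBt p ta kk n

/-- The finite BCF of length `t` with partial quotients `a_i = ta_i / p^(kk_i)`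
(`kk_i ≥ 1`, `p ∤ ta_i`, `|a_i|_∞ < p/2`, so `a_i ∈ 𝒴` and `|a_i|_p > 1`) is
*nice* if moreover: (a) `|a_0|_∞ < p/4`; (b) `|A_{t−1}/A_{t−2}|_∞ > 4/p`, which
in terms of numerators reads `|Ã_{t−1}/(p^(kk_{t−1})·Ã_{t−2})|_∞ > 4/p`;
(c) there are integers `q`, `ω ≥ 0` with `B̃_{t−1} ∣ q`, `q ∣ B̃_{t−1}²` and
`q ≡ p^ω (mod Ã_{t−1}²)`. -/
def IsNiceBCF (p t : ℕ) (ta : ℕ → ℤ) (kk : ℕ → ℕ) : Prop :=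
  1 ≤ t ∧
  (∀ i < t, 1 ≤ kk i ∧ ¬((p : ℤ) ∣ ta i) ∧
    |(ta i : ℚ)| / (p : ℚ) ^ (kk i) < (p : ℚ) / 2) ∧
  |(ta 0 : ℚ)| / (p : ℚ) ^ (kk 0) < (p : ℚ) / 4 ∧
  4 / (p : ℚ) <
    |(niceAt p ta kk t : ℚ) / ((p : ℚ) ^ (kk (t - 1)) * (niceAt p ta kk (t - 1) : ℚ))| ∧
  ∃ q : ℤ, ∃ ω : ℕ, niceBt p ta kk t ∣ q ∧ q ∣ (niceBt p ta kk t) ^ 2 ∧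
    q ≡ (p : ℤ) ^ ω [ZMOD (niceAt p ta kk t) ^ 2]

/-- The finite sequence `β_n^k` (of length `2^n`) of partial quotients:
`β_1^k = (1/p^k, 1/p^k)`, and if `β_n^k = (b_0, …, b_{2^n−1})` then
`β_{n+1}^k` has entries `(−1)^i·b_i` in position `2i` and `(−1)^i/p^k` in
position `2i+1`. -/
def betaCF (p k : ℕ) : ℕ → ℕ → ℚ
  | 0, _ => 0
  | 1, _ => 1 / (p : ℚ) ^ k
  | (n + 2), j =>
      if j % 2 = 0 then (-1 : ℚ) ^ (j / 2) * betaCF p k (n + 1) (j / 2)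
      else (-1 : ℚ) ^ (j / 2) / (p : ℚ) ^ k

/-!
Write `w = 1 / p ^ k`. The entries of `β_{n+1}` are `w` times signs, and its odd-indexed entries
alternate in sign. Whenever odd-indexed partial quotients alternate, every other convergent again
satisfies a continuant recurrence, whose partial quotients are the products `a (2i) * a (2i + 1)`;
here these are `w ^ 2` times the signs of `β_n`. Thus passing from `β_n` to `β_{n+1}` replaces `w`
by `w ^ 2`, which gives closed forms in `w` for the last two denominators and the last numerator.
The determinant identity then determines the remaining numerator, which is nonzero and lies in
`[-w, w]`, while the last one is at least `1`; so their ratio is at least `1 / w`.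
-/

/-- The continuants of the continued fraction with partial quotients `a`, with indices shifted by
one so that they start at `0`: `A (j + 1)` and `B (j + 1)` are `A_j` and `B_j` in the usual
notation. -/
structure IsShiftedContinuants {R : Type*} [CommRing R] (a A B : ℕ → R) : Prop where
  num_zero : A 0 = 1
  num_one : A 1 = a 0
  den_zero : B 0 = 0
  den_one : B 1 = 1
  num_add_two (j : ℕ) : A (j + 2) = a (j + 1) * A (j + 1) + A j
  den_add_two (j : ℕ) : B (j + 2) = a (j + 1) * B (j + 1) + B j

theorem IsContinuants.isShiftedContinuants {a : ℕ → ℚ} {A B : ℤ → ℚ} (h : IsContinuants a A B) :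
    IsShiftedContinuants a (fun j => A ((j : ℤ) - 1)) (fun j => B ((j : ℤ) - 1)) := by
  obtain ⟨hA, hA₀, hB, hB₀, hrec⟩ := h
  have index_one (j : ℕ) : ((j + 2 : ℕ) : ℤ) - 1 = (j + 1 : ℕ) := by push_cast; ring
  have index_two (j : ℕ) : ((j + 1 : ℕ) : ℤ) - 2 = j - 1 := by push_cast; ring
  refine ⟨by simpa using hA, by simpa using hA₀, by simpa using hB, by simpa using hB₀,
    fun j => ?_, fun j => ?_⟩
  · simpa only [index_one, index_two] using (hrec (j + 1) j.succ_pos).1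
  · simpa only [index_one, index_two] using (hrec (j + 1) j.succ_pos).2

theorem continuant_rec_two_mul {R : Type*} [CommRing R] {a F : ℕ → R}
    (hF : ∀ j, F (j + 2) = a (j + 1) * F (j + 1) + F j)
    (ha : ∀ i, a (2 * i + 3) = -a (2 * i + 1)) (i : ℕ) :
    F (2 * (i + 2)) = a (2 * (i + 1)) * a (2 * (i + 1) + 1) * F (2 * (i + 1)) + F (2 * i) := by
  have h₀ := hF (2 * i)
  have h₁ := hF (2 * i + 1)
  have h₂ := hF (2 * i + 2)
  simp only [mul_add, mul_one, add_assoc, Nat.reduceAdd, Nat.reduceMul] at *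
  linear_combination h₂ + a (2 * i + 3) * h₁ + h₀ + F (2 * i + 1) * ha i

namespace IsShiftedContinuants

theorem det_eq {R : Type*} [CommRing R] {a A B : ℕ → R} (h : IsShiftedContinuants a A B) (j : ℕ) :
    A (j + 1) * B j - A j * B (j + 1) = (-1) ^ (j + 1) := by
  induction j with
  | zero => simp [h.num_zero, h.den_zero, h.den_one]
  | succ j ih =>
    rw [h.num_add_two, h.den_add_two, pow_succ]
    linear_combination -ih

theorem contract {K : Type*} [Field K] {a A B : ℕ → K} (h : IsShiftedContinuants a A B)
    (ha₁ : a 1 ≠ 0) (ha : ∀ i, a (2 * i + 3) = -a (2 * i + 1)) :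
    IsShiftedContinuants (fun i => a (2 * i) * a (2 * i + 1))
      (fun i => A (2 * i) - B (2 * i) / a 1) (fun i => B (2 * i) / a 1) where
  num_zero := by simp [h.num_zero, h.den_zero]
  num_one := by
    have hA := h.num_add_two 0
    have hB := h.den_add_two 0
    simp only [zero_add, h.num_zero, h.num_one, h.den_zero, h.den_one] at hA hB
    simp only [mul_one, mul_zero, zero_add, hA, hB]
    field_simp
    ring
  den_zero := by simp [h.den_zero]
  den_one := by
    have hB := h.den_add_two 0
    simp only [zero_add, h.den_zero, h.den_one] at hB
    simp [hB, ha₁]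
  num_add_two i := by
    rw [continuant_rec_two_mul h.num_add_two ha, continuant_rec_two_mul h.den_add_two ha]
    ring
  den_add_two i := by
    rw [continuant_rec_two_mul h.den_add_two ha]
    ring

end IsShiftedContinuants

section IntegerNumerators

open Finset

variable {K : Type*} [Field K] {p : ℕ} (ta : ℕ → ℤ) (kk : ℕ → ℕ)

theorem continuant_rec_of_numerator_rec (hp : (p : K) ≠ 0) {N : ℕ → ℤ}
    (hN : ∀ j, N (j + 2) = ta (j + 1) * N (j + 1) + (p : ℤ) ^ (kk (j + 1) + kk j) * N j) (j : ℕ) :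
    (N (j + 2) : K) / (p : K) ^ ∑ i ∈ range (j + 2), kk i =
      (ta (j + 1) : K) / (p : K) ^ kk (j + 1) *
        ((N (j + 1) : K) / (p : K) ^ ∑ i ∈ range (j + 1), kk i) +
      (N j : K) / (p : K) ^ ∑ i ∈ range j, kk i := by
  rw [hN, sum_range_succ, sum_range_succ]
  push_cast
  simp only [pow_add]
  field_simp

theorem isShiftedContinuants_niceAt_niceBt (hp : (p : K) ≠ 0) :
    IsShiftedContinuants (fun j => (ta j : K) / (p : K) ^ kk j)
      (fun j => (niceAt p ta kk j : K) / (p : K) ^ ∑ i ∈ range j, kk i)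
      (fun j => (p : K) ^ kk 0 * ((niceBt p ta kk j : K) / (p : K) ^ ∑ i ∈ range j, kk i)) where
  num_zero := by simp [niceAt]
  num_one := by simp [niceAt]
  den_zero := by simp [niceBt]
  den_one := by simp [niceBt, hp]
  num_add_two := continuant_rec_of_numerator_rec ta kk hp fun _ => rfl
  den_add_two j := by
    rw [continuant_rec_of_numerator_rec ta kk hp fun _ => rfl]
    ring

theorem niceAt_succ_div (hp : (p : K) ≠ 0) (j : ℕ) :
    (niceAt p ta kk (j + 1) : K) / ((p : K) ^ kk j * niceAt p ta kk j) =
      ((niceAt p ta kk (j + 1) : K) / (p : K) ^ ∑ i ∈ range (j + 1), kk i) /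
        ((niceAt p ta kk j : K) / (p : K) ^ ∑ i ∈ range j, kk i) := by
  rw [sum_range_succ, pow_add]
  field_simp

end IntegerNumerators

section Signs

/-- The sign pattern of the folded continued fraction: the `j`-th entry of `β_{n+1}^k` is
`betaSign n j / p ^ k`. -/
def betaSign : ℕ → ℕ → ℤˣ
  | 0, _ => 1
  | n + 1, j => (-1) ^ (j / 2) * if Even j then betaSign n (j / 2) else 1

theorem betaSign_succ_two_mul (n i : ℕ) :
    betaSign (n + 1) (2 * i) = (-1) ^ i * betaSign n i := by
  simp [betaSign]

theorem betaSign_succ_two_mul_add_one (n i : ℕ) : betaSign (n + 1) (2 * i + 1) = (-1) ^ i := by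
  simp [betaSign, show (2 * i + 1) / 2 = i by lia]

theorem betaSign_succ_mul (n i : ℕ) :
    betaSign (n + 1) (2 * i) * betaSign (n + 1) (2 * i + 1) = betaSign n i := by
  rw [betaSign_succ_two_mul, betaSign_succ_two_mul_add_one, mul_right_comm, Int.units_mul_self,
    one_mul]

theorem betaCF_succ (p k n : ℕ) :
    betaCF p k (n + 1) = fun j => ((betaSign n j : ℤ) : ℚ) / (p : ℚ) ^ k := by
  induction n with
  | zero => simp [betaCF, betaSign]
  | succ n ih =>
    funext j
    by_cases hj : Even j <;>
      simp [betaCF, betaSign, ih, hj, ← Nat.even_iff, mul_div_assoc]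

end Signs

section GapSum

/-- The sum of `w ^ (2 ^ (n + 1) - 2 ^ j)` over `1 ≤ j ≤ n`, in Horner form. The last
continuants of `β_{n+1}^k` are expressed through it, with `w = 1 / p ^ k`. -/
def gapSum {R : Type*} [Semiring R] (w : R) : ℕ → R
  | 0 => 0
  | n + 1 => w ^ 2 ^ (n + 1) * (1 + gapSum w n)

theorem sq_mul_gapSum_succ {R : Type*} [CommSemiring R] (w : R) (n : ℕ) :
    w ^ 2 * gapSum w (n + 1) = w ^ 2 * gapSum (w ^ 2) n + w ^ 2 ^ (n + 2) := by
  induction n with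
  | zero =>
    simp only [gapSum]
    ring
  | succ n ih =>
    calc w ^ 2 * gapSum w (n + 2)
        = w ^ 2 ^ (n + 2) * (w ^ 2 + w ^ 2 * gapSum w (n + 1)) := by rw [gapSum]; ring
      _ = w ^ 2 * ((w ^ 2) ^ 2 ^ (n + 1) * (1 + gapSum (w ^ 2) n)) + w ^ 2 ^ (n + 3) := by
          rw [ih]; ring

variable {K : Type*} [Field K] [LinearOrder K] [IsStrictOrderedRing K] {w : K}

theorem gapSum_nonneg (hw : 0 ≤ w) (n : ℕ) : 0 ≤ gapSum w n := by
  induction n with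
  | zero => exact le_rfl
  | succ n ih => rw [gapSum]; positivity

theorem gapSum_succ_pos (hw : 0 < w) (n : ℕ) : 0 < gapSum w (n + 1) := by
  have := gapSum_nonneg hw.le n
  rw [gapSum]
  positivity

theorem gapSum_le_sq (hw : 0 ≤ w) (hw' : w ≤ 1 / 2) (n : ℕ) : gapSum w n ≤ w ^ 2 := by
  have hsq : w ^ 2 ≤ 1 / 4 := by nlinarith
  induction n with
  | zero => exact sq_nonneg w
  | succ n ih =>
    rcases n with - | n
    · simp [gapSum]
    · have hpow : w ^ 2 ^ (n + 2) ≤ w ^ 4 :=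
        pow_le_pow_of_le_one hw (by linarith) (Nat.pow_le_pow_right two_pos (by lia : 2 ≤ n + 2))
      calc w ^ 2 ^ (n + 2) * (1 + gapSum w (n + 1))
          ≤ w ^ 4 * (1 + 1 / 4) := by
            gcongr
            · linarith [gapSum_nonneg hw (n + 1)]
            · linarith
        _ ≤ w ^ 2 := by nlinarith [sq_nonneg w]

end GapSum

namespace betaSign

variable {K : Type*} [Field K] {w : K} {n : ℕ} {A B : ℕ → K}

theorem contract (hw : w ≠ 0)
    (h : IsShiftedContinuants (fun j => w * (betaSign (n + 1) j : ℤ)) A B) :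
    IsShiftedContinuants (fun j => w ^ 2 * (betaSign n j : ℤ))
      (fun i => A (2 * i) - B (2 * i) / w) (fun i => B (2 * i) / w) := by
  have hsign (i : ℕ) : betaSign (n + 1) (2 * i + 3) = -betaSign (n + 1) (2 * i + 1) := by
    rw [show 2 * i + 3 = 2 * (i + 1) + 1 by ring]
    simp only [betaSign_succ_two_mul_add_one, pow_succ, mul_neg_one]
  have hone : betaSign (n + 1) 1 = 1 := betaSign_succ_two_mul_add_one n 0
  convert h.contract (by simpa [hone] using hw) (fun i => by simp [hsign]) using 2 with i
  · rw [← betaSign_succ_mul]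
    push_cast
    ring
  · simp [hone]
  · simp [hone]

theorem mul_den_two_pow (hw : w ≠ 0)
    (h : IsShiftedContinuants (fun j => w * (betaSign n j : ℤ)) A B) :
    w * B (2 ^ (n + 1)) = w ^ 2 ^ (n + 1) := by
  induction n generalizing w A B with
  | zero => simp [h.den_add_two, h.den_one, h.den_zero, betaSign, sq]
  | succ n ih =>
    have hB := ih (pow_ne_zero 2 hw) (contract hw h)
    rw [← pow_succ', ← pow_mul, ← pow_succ'] at hB
    rw [← hB]
    field_simp

theorem num_two_pow (hw : w ≠ 0)
    (h : IsShiftedContinuants (fun j => w * (betaSign n j : ℤ)) A B) :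
    A (2 ^ (n + 1)) = 1 + w ^ 2 ^ (n + 1) + gapSum w n := by
  induction n generalizing w A B with
  | zero =>
    simp only [zero_add, pow_one, h.num_add_two, h.num_one, h.num_zero, betaSign, gapSum,
      Units.val_one, Int.cast_one]
    ring
  | succ n ih =>
    have hA := ih (pow_ne_zero 2 hw) (contract hw h)
    have hB := mul_den_two_pow hw h
    rw [← pow_succ', ← pow_mul, ← pow_succ'] at hA
    refine mul_left_cancel₀ (pow_ne_zero 2 hw) ?_
    have hdiv : w ^ 2 * (B (2 ^ (n + 2)) / w) = w * B (2 ^ (n + 2)) := by field_simp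
    linear_combination w ^ 2 * hA - sq_mul_gapSum_succ w n + hB + hdiv

theorem den_two_pow_sub_one (hw : w ≠ 0)
    (h : IsShiftedContinuants (fun j => w * (betaSign n j : ℤ)) A B) :
    B (2 ^ (n + 1) - 1) = 1 - gapSum w n := by
  induction n generalizing w A B with
  | zero => simp [h.den_one, gapSum]
  | succ n ih =>
    have hB := ih (pow_ne_zero 2 hw) (contract hw h)
    have hlast := mul_den_two_pow hw h
    obtain ⟨m, hm⟩ : ∃ m, 2 ^ (n + 1) = m + 1 := Nat.exists_eq_add_one.2 (by positivity)
    have hm_odd : Odd m := by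
      have : Even (m + 1) := hm ▸ even_two.pow_of_ne_zero n.succ_ne_zero
      simpa [Nat.even_add_one] using this
    have hpow : 2 ^ (n + 2) = 2 * m + 2 := by rw [pow_succ, hm]; ring
    have hrec := h.den_add_two (2 * m)
    rw [betaSign_succ_two_mul_add_one, hm_odd.neg_one_pow] at hrec
    push_cast at hrec
    rw [hm, Nat.add_sub_cancel, div_eq_iff hw] at hB
    have hgap := sq_mul_gapSum_succ w n
    rw [hpow] at hlast hgap ⊢
    rw [show 2 * m + 2 - 1 = 2 * m + 1 by lia]
    refine mul_left_cancel₀ (pow_ne_zero 2 hw) ?_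
    linear_combination w * hrec + w * hB - hlast + hgap

theorem num_two_pow_sub_one (hw : w ≠ 0)
    (h : IsShiftedContinuants (fun j => w * (betaSign (n + 1) j : ℤ)) A B) :
    A (2 ^ (n + 2) - 1) = -(w * (2 * gapSum w n + gapSum w n ^ 2 + gapSum w (n + 1))) := by
  set u := w ^ 2 ^ (n + 1) with hu
  set g := gapSum w n
  have hu_sq : w ^ 2 ^ (n + 2) = u ^ 2 := by rw [hu, ← pow_mul, ← pow_succ]
  have hgap : gapSum w (n + 1) = u * (1 + g) := rfl
  have hlast := mul_den_two_pow hw h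
  have hdet := h.det_eq (2 ^ (n + 2) - 1)
  rw [Nat.sub_add_cancel Nat.one_le_two_pow,
    (even_two.pow_of_ne_zero (by lia : n + 2 ≠ 0)).neg_one_pow, num_two_pow hw h,
    den_two_pow_sub_one hw h, hu_sq, hgap] at hdet
  rw [hu_sq] at hlast
  refine mul_left_cancel₀ (pow_ne_zero 2 (pow_ne_zero _ hw : u ≠ 0)) ?_
  calc u ^ 2 * A (2 ^ (n + 2) - 1)
      = w * (A (2 ^ (n + 2) - 1) * B (2 ^ (n + 2))) := by rw [← hlast]; ring
    _ = w * (u ^ 2 - u ^ 2 * (u * (1 + g)) - (u * (1 + g)) ^ 2) := by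
        linear_combination -w * hdet
    _ = u ^ 2 * -(w * (2 * g + g ^ 2 + gapSum w (n + 1))) := by rw [hgap]; ring

variable [LinearOrder K] [IsStrictOrderedRing K]

theorem one_le_num_two_pow (hw : 0 < w)
    (h : IsShiftedContinuants (fun j => w * (betaSign n j : ℤ)) A B) : 1 ≤ A (2 ^ (n + 1)) := by
  have := gapSum_nonneg hw.le n
  have : 0 < w ^ 2 ^ (n + 1) := by positivity
  rw [num_two_pow hw.ne' h]
  linarith

theorem abs_num_two_pow_sub_one_mem_Ioc (hw : 0 < w) (hw' : w ≤ 1 / 2)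
    (h : IsShiftedContinuants (fun j => w * (betaSign n j : ℤ)) A B) :
    |A (2 ^ (n + 1) - 1)| ∈ Set.Ioc 0 w := by
  rcases n with - | n
  · have hA : A 1 = w := by simpa [betaSign] using h.num_one
    simp [hA, abs_of_pos hw, hw]
  · have hsq : w ^ 2 ≤ 1 / 4 := by nlinarith
    have hg := gapSum_nonneg hw.le n
    have hg' := gapSum_le_sq hw.le hw' n
    have hs := gapSum_succ_pos hw n
    have hs' := gapSum_le_sq hw.le hw' (n + 1)
    rw [num_two_pow_sub_one hw.ne' h, abs_neg, abs_of_pos (by positivity)]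
    refine ⟨by positivity, mul_le_of_le_one_right hw.le ?_⟩
    calc 2 * gapSum w n + gapSum w n ^ 2 + gapSum w (n + 1)
        ≤ 2 * (1 / 4) + (1 / 4) ^ 2 + 1 / 4 := by gcongr <;> linarith
      _ ≤ 1 := by norm_num

theorem inv_le_abs_num_div_num (hw : 0 < w) (hw' : w ≤ 1 / 2)
    (h : IsShiftedContinuants (fun j => w * (betaSign n j : ℤ)) A B) :
    w⁻¹ ≤ |A (2 ^ (n + 1)) / A (2 ^ (n + 1) - 1)| := by
  obtain ⟨hpos, hle⟩ := abs_num_two_pow_sub_one_mem_Ioc hw hw' h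
  rw [abs_div, ← one_div]
  exact div_le_div₀ (abs_nonneg _) ((one_le_num_two_pow hw h).trans (le_abs_self _)) hpos hle

end betaSign

section

variable {p k n : ℕ}

theorem two_le_of_three_le_pow (hpk : 3 ≤ p ^ k) : 2 ≤ p := by
  by_contra! hp
  have := pow_le_one₀ (n := k) p.zero_le (Nat.le_of_lt_succ hp)
  lia

theorem four_div_lt_pow (hpk : 3 ≤ p ^ k) : 4 / (p : ℚ) < (p : ℚ) ^ k := by
  have hp := two_le_of_three_le_pow hpk
  rw [div_lt_iff₀ (by positivity)]
  exact_mod_cast (by nlinarith : 4 < p ^ k * p)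

namespace betaCF

theorem den_two_pow (hp : (p : ℚ) ≠ 0) {A B : ℕ → ℚ}
    (h : IsShiftedContinuants (betaCF p k (n + 1)) A B) :
    B (2 ^ (n + 1)) = 1 / (p : ℚ) ^ (k * (2 ^ (n + 1) - 1)) := by
  simp only [betaCF_succ, div_eq_inv_mul] at h
  have hw : ((p : ℚ) ^ k)⁻¹ ≠ 0 := by positivity
  refine mul_left_cancel₀ hw ?_
  rw [betaSign.mul_den_two_pow hw h, pow_mul, one_div, ← inv_pow _ (2 ^ (n + 1) - 1),
    mul_pow_sub_one (by positivity)]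

theorem four_div_lt_abs_num_div_num (hpk : 3 ≤ p ^ k) {A B : ℕ → ℚ}
    (h : IsShiftedContinuants (betaCF p k (n + 1)) A B) :
    4 / (p : ℚ) < |A (2 ^ (n + 1)) / A (2 ^ (n + 1) - 1)| := by
  simp only [betaCF_succ, div_eq_inv_mul] at h
  have hpk' : (3 : ℚ) ≤ (p : ℚ) ^ k := by exact_mod_cast hpk
  have hw : ((p : ℚ) ^ k)⁻¹ ≤ 1 / 2 := by
    rw [one_div]
    exact inv_anti₀ two_pos (by linarith)
  calc 4 / (p : ℚ) < (p : ℚ) ^ k := four_div_lt_pow hpk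
    _ = (((p : ℚ) ^ k)⁻¹)⁻¹ := (inv_inv _).symm
    _ ≤ _ := betaSign.inv_le_abs_num_div_num (by positivity) hw h

theorem isShiftedContinuants (hp : (p : ℚ) ≠ 0) :
    IsShiftedContinuants (betaCF p k (n + 1))
      (fun j => (niceAt p (fun i => betaSign n i) (fun _ => k) j : ℚ) /
        (p : ℚ) ^ ∑ _i ∈ Finset.range j, k)
      (fun j => (p : ℚ) ^ k * ((niceBt p (fun i => betaSign n i) (fun _ => k) j : ℚ) /
        (p : ℚ) ^ ∑ _i ∈ Finset.range j, k)) := by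
  rw [betaCF_succ]
  exact isShiftedContinuants_niceAt_niceBt _ _ hp

theorem niceBt_two_pow (hp : (p : ℚ) ≠ 0) :
    niceBt p (fun i => betaSign n i) (fun _ => k) (2 ^ (n + 1)) = 1 := by
  have h := den_two_pow hp (isShiftedContinuants (k := k) (n := n) hp)
  obtain ⟨m, hm⟩ : ∃ m, 2 ^ (n + 1) = m + 1 := Nat.exists_eq_add_one.2 (by positivity)
  simp only [hm, Nat.add_sub_cancel, Finset.sum_const, Finset.card_range, smul_eq_mul, add_mul,
    one_mul, mul_comm k, pow_add] at h ⊢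
  field_simp at h
  exact_mod_cast h

theorem four_div_lt_abs_niceAt_div (hpk : 3 ≤ p ^ k) :
    4 / (p : ℚ) < |(niceAt p (fun i => betaSign n i) (fun _ => k) (2 ^ (n + 1)) : ℚ) /
      ((p : ℚ) ^ k * niceAt p (fun i => betaSign n i) (fun _ => k) (2 ^ (n + 1) - 1))| := by
  have hp_two := two_le_of_three_le_pow hpk
  have hp : (p : ℚ) ≠ 0 := by positivity
  have h := four_div_lt_abs_num_div_num hpk (isShiftedContinuants (n := n) hp)
  obtain ⟨m, hm⟩ : ∃ m, 2 ^ (n + 1) = m + 1 := Nat.exists_eq_add_one.2 (by positivity)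
  rw [hm, Nat.add_sub_cancel] at h ⊢
  rwa [niceAt_succ_div _ (fun _ => k) hp m]

theorem isNiceBCF (hpk : 3 ≤ p ^ k) :
    IsNiceBCF p (2 ^ (n + 1)) (fun i => betaSign n i) (fun _ => k) := by
  have hk : k ≠ 0 := by rintro rfl; simp at hpk
  have hp_two := two_le_of_three_le_pow hpk
  have hp : (p : ℚ) ≠ 0 := by positivity
  have hsize : 1 / (p : ℚ) ^ k < (p : ℚ) / 4 := by
    simpa using one_div_lt_one_div_of_lt (by positivity) (four_div_lt_pow hpk)
  have habs (i : ℕ) : |(((betaSign n i : ℤˣ) : ℤ) : ℚ)| = 1 := by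
    rcases Int.units_eq_one_or (betaSign n i) with h | h <;> simp [h]
  refine ⟨Nat.one_le_two_pow, fun i _ => ⟨by lia, fun hdvd => ?_, ?_⟩, ?_, ?_, 1, 0, ?_, ?_, ?_⟩
  · have hunit : IsUnit (p : ℤ) := isUnit_of_dvd_unit hdvd (betaSign n i).isUnit
    rw [Int.ofNat_isUnit, Nat.isUnit_iff] at hunit
    lia
  · rw [habs]
    have : (0 : ℚ) < p := by positivity
    linarith
  · rwa [habs]
  · exact four_div_lt_abs_niceAt_div hpk
  · rw [niceBt_two_pow hp]
  · rw [niceBt_two_pow hp, one_pow]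
  · rw [pow_zero]

end betaCF

end

theorem betaCF_is_nice_general {p n k : ℕ} (hn : 1 ≤ n) (hpk : 3 ≤ p ^ k)
    {A B : ℤ → ℚ} (hAB : IsContinuants (betaCF p k n) A B) :
    B ((2 ^ n : ℤ) - 1) = 1 / (p : ℚ) ^ (k * (2 ^ n - 1)) ∧
    4 / (p : ℚ) < |A ((2 ^ n : ℤ) - 1) / A ((2 ^ n : ℤ) - 2)| ∧
    ∃ ta : ℕ → ℤ, ∃ kk : ℕ → ℕ,
      (∀ j < 2 ^ n, (ta j : ℚ) / (p : ℚ) ^ (kk j) = betaCF p k n j) ∧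
      IsNiceBCF p (2 ^ n) ta kk := by
  obtain ⟨n, rfl⟩ := Nat.exists_eq_add_one.2 hn
  have hp_two := two_le_of_three_le_pow hpk
  have hp : (p : ℚ) ≠ 0 := by positivity
  have h := hAB.isShiftedContinuants
  refine ⟨by simpa using betaCF.den_two_pow hp h, ?_, fun i => betaSign n i, fun _ => k, ?_,
    betaCF.isNiceBCF hpk⟩
  · have hindex : (2 : ℤ) ^ (n + 1) - 2 = (2 ^ (n + 1) - 1 : ℕ) - 1 := by
      push_cast [Nat.one_le_two_pow]
      ring
    simpa [hindex] using betaCF.four_div_lt_abs_num_div_num hpk h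
  · intro j _
    rw [betaCF_succ]

/-- for every odd prime `p` and `n, k ≥ 1`, the continuants of
`β_n^k` satisfy `B_{2^n−1} = 1/p^{k(2^n−1)}` (so its prime-to-`p` numerator is
`1`) and `|A_{2^n−1}/A_{2^n−2}|_∞ > 4/p`; in particular `β_n^k` is a nice BCF. -/
theorem betaCF_is_nice
    (p : ℕ) [Fact p.Prime] (hp : Odd p) (n k : ℕ) (hn : 1 ≤ n) (hk : 1 ≤ k)
    (A B : ℤ → ℚ) (hAB : IsContinuants (betaCF p k n) A B) :
    B ((2 ^ n : ℤ) - 1) = 1 / (p : ℚ) ^ (k * (2 ^ n - 1)) ∧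
    4 / (p : ℚ) < |A ((2 ^ n : ℤ) - 1) / A ((2 ^ n : ℤ) - 2)| ∧
    ∃ ta : ℕ → ℤ, ∃ kk : ℕ → ℕ,
      (∀ j < 2 ^ n, (ta j : ℚ) / (p : ℚ) ^ (kk j) = betaCF p k n j) ∧
      IsNiceBCF p (2 ^ n) ta kk := by
  refine betaCF_is_nice_general hn ?_ hAB
  have hp3 : 3 ≤ p := by
    have := (Fact.out : p.Prime).two_le
    rcases hp with ⟨c, rfl⟩
    lia
  exact hp3.trans (Nat.le_self_pow (by lia) p)
end

section
/- Fix an odd prime p and let (a_0, …, a_{t−1}) be a nice BCF, with a_i = ã_i/p^{k_i} as in the definition. Then for every bound M ≥ 0 there exist c ∈ 𝒴, setting a_t := 2c, with a_t ∈ 𝒴 and v_p(a_t) < −M, and an integer m with p ∤ m, such that the infinite eventually periodic continued fraction [a_0; a_1, …, a_{t−1}, a_t, a_{t−1}, …, a_1, 2a_0 repeated] (partial quotients a_0 followed by the period (a_1, …, a_{t−1}, a_t, a_{t−1}, …, a_1, 2a_0) repeated forever) converges in ℚ_p — its convergents A_n/B_n tend p-adically to a limit β — and the limit satisfies p^{2k_0}·m·β²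 = 1; that is, β = 1/(p^{k_0}√m) for a square root √m of m in ℚ_p. -/
/-- `y ∈ 𝒴 = ℤ[1/p] ∩ (−p/2, p/2)`: a possible Browkin partial quotient. -/
def IsBrowkinDigit (p : ℕ) (y : ℚ) : Prop :=
  (∃ z : ℤ, ∃ j : ℕ, y = (z : ℚ) / (p : ℚ) ^ j) ∧
  -(p : ℚ) / 2 < y ∧ y < (p : ℚ) / 2

/-- `αs` is the sequence of complete quotients and `a` the sequence of partial
quotients of the (non-terminating) Browkin continued fraction algorithm:
`a n = s (αs n)` (i.e. `a n ∈ 𝒴` and `|αs n − a n|_p < 1`) and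
`αs (n+1) = 1/(αs n − a n)`. -/
def IsBCF (p : ℕ) [Fact p.Prime] (αs : ℕ → ℚ_[p]) (a : ℕ → ℚ) : Prop :=
  ∀ n, IsBrowkinDigit p (a n) ∧ ‖αs n - (a n : ℚ_[p])‖ < 1 ∧
    αs (n + 1) = (αs n - (a n : ℚ_[p]))⁻¹

/-! Write `P = [A_{t-1}, A_{t-2}; B_{t-1}, B_{t-2}]`. Running once through the period acts on
convergents as a Möbius map which, because the period is a palindrome up to the doubling of `a_0`,
has the form `z ↦ (ν z + μ) / (λ z + ν)`, where `[μ, ν; ν, λ] = P [a_t, 1; 1, 0] Pᵀ`. All partial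
quotients after `a_0` are `p`-adically large, so the convergents have a limit `β`; it is a fixed
point, i.e. `λ β² = μ`. With `a_t = 2c / p ^ k`, `A = Ã_{t-1}`, `A' = Ã_{t-2}`, `B = B̃_{t-1}`,
`B' = B̃_{t-2}` and `Q = p ^ (k + k_{t-1})` this reads
`p ^ (2 k_0) B (c B + Q B') β² = A (c A + Q A')`.

So `m = B (c B + Q B') / (A (c A + Q A'))` has to be an integer. The idea is to ask for
`c A + Q A' = -d`, where `q = ±B d`. As `A B' - A' B` is `±` a power of `p`, the integer `c` exists
and `A` divides `c B + Q B'` as soon as `q` is congruent modulo `A²` to a specific power of `p`,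
whose exponent grows with `k`; Euler's theorem and condition (c) achieve this for arbitrarily
large `k`. Finally `|c / p ^ k|` tends to `|Q A' / (p ^ k A)| = |A_{t-2} / A_{t-1}|`, which is less
than `p / 4` by condition (b). -/

open Filter Topology

section Matrix

variable {R S : Type*} [CommRing R] [CommRing S]

/-- The elementary matrix of a partial quotient: the matrix of the Möbius map `z ↦ x + 1 / z`. -/
def quotientMatrix (x : R) : Matrix (Fin 2) (Fin 2) R := !![x, 1; 1, 0]

/-- The matrix `[A_n, A_{n-1}; B_n, B_{n-1}]` of continuants of the finite continued fraction
`[x_0; x_1, …, x_n]`, for the word `l = [x_0, …, x_n]`. -/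
def wordMatrix (l : List R) : Matrix (Fin 2) (Fin 2) R := (l.map quotientMatrix).prod

theorem wordMatrix_cons (x : R) (l : List R) :
    wordMatrix (x :: l) = quotientMatrix x * wordMatrix l := by
  simp [wordMatrix]

theorem wordMatrix_singleton (x : R) : wordMatrix [x] = quotientMatrix x := by
  simp [wordMatrix]

theorem wordMatrix_append (l l' : List R) :
    wordMatrix (l ++ l') = wordMatrix l * wordMatrix l' := by
  simp [wordMatrix]

theorem transpose_quotientMatrix (x : R) : (quotientMatrix x).transpose = quotientMatrix x := by
  ext i j; fin_cases i <;> fin_cases j <;> rfl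

theorem wordMatrix_reverse (l : List R) : wordMatrix l.reverse = (wordMatrix l).transpose := by
  simp [wordMatrix, Matrix.transpose_list_prod, Function.comp_def, transpose_quotientMatrix]

theorem det_wordMatrix (l : List R) : (wordMatrix l).det = (-1) ^ l.length := by
  induction l with
  | nil => simp [wordMatrix]
  | cons x l ih =>
    rw [wordMatrix_cons, Matrix.det_mul, ih, List.length_cons, pow_succ']
    simp [quotientMatrix]

theorem wordMatrix_map (f : R →+* S) (l : List R) :
    wordMatrix (l.map f) = (wordMatrix l).map f := by
  have h (x : R) : quotientMatrix (f x) = f.mapMatrix (quotientMatrix x) := by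
    ext i j; fin_cases i <;> fin_cases j <;> simp [quotientMatrix]
  simp [wordMatrix, ← RingHom.mapMatrix_apply, map_list_prod, Function.comp_def, h]

/-- The matrix of continuants of the first `n` partial quotients of `e`. Its index is shifted:
`A_n` and `B_n` form the first column of `convergentMatrix e (n + 1)`. -/
def convergentMatrix (e : ℕ → R) (n : ℕ) : Matrix (Fin 2) (Fin 2) R :=
  wordMatrix ((List.range n).map e)

theorem convergentMatrix_succ (e : ℕ → R) (n : ℕ) :
    convergentMatrix e (n + 1) = convergentMatrix e n * quotientMatrix (e n) := by
  simp [convergentMatrix, List.range_succ, wordMatrix_append, wordMatrix_singleton]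

theorem convergentMatrix_succ_apply_zero (e : ℕ → R) (n : ℕ) (i : Fin 2) :
    convergentMatrix e (n + 1) i 0 = convergentMatrix e n i 0 * e n + convergentMatrix e n i 1 := by
  simp [convergentMatrix_succ, quotientMatrix, Matrix.mul_apply]

theorem convergentMatrix_succ_apply_one (e : ℕ → R) (n : ℕ) (i : Fin 2) :
    convergentMatrix e (n + 1) i 1 = convergentMatrix e n i 0 := by
  simp [convergentMatrix_succ, quotientMatrix, Matrix.mul_apply]

theorem det_convergentMatrix (e : ℕ → R) (n : ℕ) : (convergentMatrix e n).det = (-1) ^ n := by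
  simp [convergentMatrix, det_wordMatrix]

theorem IsContinuants.convergentMatrix_eq {e : ℕ → ℚ} {A B : ℤ → ℚ} (h : IsContinuants e A B)
    (n : ℕ) : convergentMatrix e (n + 1) = !![A n, A (n - 1); B n, B (n - 1)] := by
  obtain ⟨hA₁, hA₀, hB₁, hB₀, hrec⟩ := h
  induction n with
  | zero =>
    simp [convergentMatrix, wordMatrix_singleton, quotientMatrix, hA₁, hA₀, hB₁, hB₀]
  | succ n ih =>
    obtain ⟨hA, hB⟩ := hrec (n + 1) (by omega)
    rw [convergentMatrix_succ, ih, quotientMatrix, hA, hB,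
      show ((n + 1 : ℕ) : ℤ) - 1 = n by omega, show ((n + 1 : ℕ) : ℤ) - 2 = n - 1 by omega]
    simp [mul_comm]

end Matrix

section Convergence

variable {K : Type*}

/-- The `n`-th convergent `A_n / B_n` of the continued fraction with partial quotients `e`. -/
def convergent [Field K] (e : ℕ → K) (n : ℕ) : K :=
  convergentMatrix e (n + 1) 0 0 / convergentMatrix e (n + 1) 1 0

theorem IsContinuants.cast_div_eq_convergent [Field K] [CharZero K] {e : ℕ → ℚ} {A B : ℤ → ℚ}
    (h : IsContinuants e A B) (n : ℕ) :
    ((A n / B n : ℚ) : K) = convergent (fun i => (e i : K)) n := by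
  have hmap : convergentMatrix (fun i => (e i : K)) (n + 1)
      = (convergentMatrix e (n + 1)).map (Rat.castHom K) := by
    rw [convergentMatrix, convergentMatrix, ← wordMatrix_map, List.map_map]
    rfl
  simp [convergent, hmap, h.convergentMatrix_eq]

variable [NormedField K] [IsUltrametricDist K] {e : ℕ → K} {r : ℝ}

theorem norm_convergentMatrix_succ {n : ℕ}
    (h : ‖convergentMatrix e n 1 1‖ < ‖convergentMatrix e n 1 0‖) (he : 1 ≤ ‖e n‖) :
    ‖convergentMatrix e (n + 1) 1 0‖ = ‖convergentMatrix e n 1 0‖ * ‖e n‖ := by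
  have hlt : ‖convergentMatrix e n 1 1‖ < ‖convergentMatrix e n 1 0 * e n‖ := by
    rw [norm_mul]
    exact h.trans_le (le_mul_of_one_le_right (norm_nonneg _) he)
  rw [convergentMatrix_succ_apply_zero,
    IsUltrametricDist.norm_add_eq_max_of_norm_ne_norm hlt.ne', max_eq_left hlt.le, norm_mul]

theorem norm_convergentMatrix_one_one_lt (he : ∀ n, 1 < ‖e (n + 1)‖) (n : ℕ) :
    ‖convergentMatrix e (n + 1) 1 1‖ < ‖convergentMatrix e (n + 1) 1 0‖ := by
  induction n with
  | zero => simp [convergentMatrix, wordMatrix_singleton, quotientMatrix]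
  | succ n ih =>
    rw [norm_convergentMatrix_succ ih (he n).le, convergentMatrix_succ_apply_one]
    exact lt_mul_of_one_lt_right ((norm_nonneg _).trans_lt ih) (he n)

theorem pow_le_norm_convergentMatrix (hr : 1 < r) (he : ∀ n, r ≤ ‖e (n + 1)‖) (n : ℕ) :
    r ^ n ≤ ‖convergentMatrix e (n + 1) 1 0‖ := by
  have he₁ (n : ℕ) : 1 < ‖e (n + 1)‖ := hr.trans_le (he n)
  induction n with
  | zero => simp [convergentMatrix, wordMatrix_singleton, quotientMatrix]
  | succ n ih =>
    rw [norm_convergentMatrix_succ (norm_convergentMatrix_one_one_lt he₁ n) (he₁ n).le, pow_succ]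
    gcongr
    exact he n

theorem convergentMatrix_one_zero_ne_zero (he : ∀ n, 1 < ‖e (n + 1)‖) (n : ℕ) :
    convergentMatrix e (n + 1) 1 0 ≠ 0 :=
  norm_pos_iff.1 ((norm_nonneg _).trans_lt (norm_convergentMatrix_one_one_lt he n))

theorem dist_convergent_succ (he : ∀ n, 1 < ‖e (n + 1)‖) (n : ℕ) :
    dist (convergent e n) (convergent e (n + 1)) =
      (‖convergentMatrix e (n + 1) 1 0‖ * ‖convergentMatrix e (n + 2) 1 0‖)⁻¹ := by
  have hB := convergentMatrix_one_zero_ne_zero he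
  have hdet := det_convergentMatrix e (n + 2)
  rw [Matrix.det_fin_two, convergentMatrix_succ_apply_one, convergentMatrix_succ_apply_one]
    at hdet
  rw [dist_comm, dist_eq_norm, convergent, convergent, div_sub_div _ _ (hB (n + 1)) (hB n),
    mul_comm (convergentMatrix e (n + 1 + 1) 1 0), hdet]
  simp [mul_comm]

theorem exists_tendsto_convergent [CompleteSpace K] (hr : 1 < r) (he : ∀ n, r ≤ ‖e (n + 1)‖) :
    ∃ β, Tendsto (convergent e) atTop (𝓝 β) := by
  refine cauchySeq_tendsto_of_complete
    (cauchySeq_of_le_geometric r⁻¹ 1 (inv_lt_one_of_one_lt₀ hr) fun n => ?_)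
  have hB := pow_le_norm_convergentMatrix hr he
  rw [dist_convergent_succ (fun n => hr.trans_le (he n)), one_mul, inv_pow]
  gcongr
  calc r ^ n ≤ ‖convergentMatrix e (n + 1) 1 0‖ := hB n
    _ ≤ _ := le_mul_of_one_le_right (norm_nonneg _) ((one_le_pow₀ hr.le).trans (hB (n + 1)))

end Convergence

section Periodic

variable {R : Type*}

/-- The sequence `e` of partial quotients starts with the word `pre` and then repeats the word `per`
forever. -/
def IsPeriodicExpansion (pre per : List R) (e : ℕ → R) : Prop :=
  (List.range pre.length).map e = pre ∧
    ∀ j, (List.range per.length).map (fun i => e (pre.length + per.length * j + i)) = per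

theorem IsPeriodicExpansion.map {S : Type*} (f : R → S) {pre per : List R} {e : ℕ → R}
    (h : IsPeriodicExpansion pre per e) :
    IsPeriodicExpansion (pre.map f) (per.map f) (fun n => f (e n)) := by
  refine ⟨?_, fun j => ?_⟩
  · conv_rhs => rw [← h.1]
    simp
  · conv_rhs => rw [← h.2 j]
    simp

theorem IsPeriodicExpansion.mem {pre per : List R} {e : ℕ → R}
    (h : IsPeriodicExpansion pre per e) (hper : per ≠ []) (n : ℕ) : e (pre.length + n) ∈ per := by
  have hmod : n % per.length < per.length := Nat.mod_lt _ (List.length_pos_iff.2 hper)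
  rw [← h.2 (n / per.length), List.mem_map]
  exact ⟨n % per.length, List.mem_range.2 hmod, by rw [add_assoc, Nat.div_add_mod]⟩

theorem IsPeriodicExpansion.convergentMatrix_eq [CommRing R] {pre per : List R} {e : ℕ → R}
    (h : IsPeriodicExpansion pre per e) (j : ℕ) :
    convergentMatrix e (pre.length + per.length * j) = wordMatrix pre * wordMatrix per ^ j := by
  induction j with
  | zero => simp [convergentMatrix, h.1]
  | succ j ih =>
    rw [mul_add_one, ← add_assoc, convergentMatrix, List.range_add, List.map_append,
      wordMatrix_append, List.map_map, ← convergentMatrix, ih, pow_succ, mul_assoc]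
    congr 3
    exact h.2 j

variable [CommRing R]

/-- The period of the continued fraction `[y; l, x, l.reverse, 2 * y, l, x, l.reverse, 2 * y, …]`;
without its last term `2 * y` it is a palindrome when read cyclically. -/
def palindromicPeriod (y : R) (l : List R) (x : R) : List R := l ++ x :: (l.reverse ++ [2 * y])

theorem map_palindromicPeriod {S : Type*} [CommRing S] (f : R →+* S) (y : R) (l : List R) (x : R) :
    (palindromicPeriod y l x).map f = palindromicPeriod (f y) (l.map f) (f x) := by
  simp [palindromicPeriod, map_ofNat]

theorem semiconjBy_wordMatrix_palindromicPeriod (y : R) (l : List R) (x : R) :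
    SemiconjBy (quotientMatrix y) (wordMatrix (palindromicPeriod y l x))
      (wordMatrix (y :: l) * quotientMatrix x * (wordMatrix (y :: l)).transpose *
        !![0, 1; 1, 0]) := by
  have hsplit : quotientMatrix (2 * y) = quotientMatrix y * !![0, 1; 1, 0] * quotientMatrix y := by
    simp [quotientMatrix, two_mul]
  rw [SemiconjBy, palindromicPeriod, wordMatrix_append, wordMatrix_cons x, wordMatrix_append,
    wordMatrix_reverse, wordMatrix_singleton, hsplit, wordMatrix_cons y, Matrix.transpose_mul,
    transpose_quotientMatrix]
  simp only [mul_assoc]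

end Periodic

section Mobius

variable {K : Type*} [Field K] [TopologicalSpace K] [IsTopologicalRing K] [T2Space K]

theorem mul_eq_of_tendsto_div
    {M : Matrix (Fin 2) (Fin 2) K} {v : ℕ → Fin 2 → K} {β : K}
    (hv : ∀ j, v (j + 1) = M.mulVec (v j)) (hv₀ : ∀ j, v j 1 ≠ 0)
    (hβ : Tendsto (fun j => v j 0 / v j 1) atTop (𝓝 β)) :
    β * (M 1 0 * β + M 1 1) = M 0 0 * β + M 0 1 := by
  have hstep (j : ℕ) : v (j + 1) 0 / v (j + 1) 1 * (M 1 0 * (v j 0 / v j 1) + M 1 1)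
      = M 0 0 * (v j 0 / v j 1) + M 0 1 := by
    have h₀ := hv₀ j
    have h₁ := hv₀ (j + 1)
    have e₀ : v (j + 1) 0 = M 0 0 * v j 0 + M 0 1 * v j 1 := by
      simp [hv, Matrix.mulVec, dotProduct]
    have e₁ : v (j + 1) 1 = M 1 0 * v j 0 + M 1 1 * v j 1 := by
      simp [hv, Matrix.mulVec, dotProduct]
    field_simp
    rw [e₀, e₁]
    ring
  have hβ' := hβ.comp (tendsto_add_atTop_nat 1)
  exact tendsto_nhds_unique
    ((hβ'.mul ((hβ.const_mul (M 1 0)).add_const (M 1 1))).congr hstep)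
    ((hβ.const_mul (M 0 0)).add_const (M 0 1))


theorem IsPeriodicExpansion.mul_sq_eq {y x β : K} {l : List K} {e : ℕ → K}
    (h : IsPeriodicExpansion [y] (palindromicPeriod y l x) e)
    (hB : ∀ n, convergentMatrix e (n + 1) 1 0 ≠ 0) (hβ : Tendsto (convergent e) atTop (𝓝 β)) :
    wordMatrix (y :: l) 1 0 * (x * wordMatrix (y :: l) 1 0 + 2 * wordMatrix (y :: l) 1 1) * β ^ 2 =
      wordMatrix (y :: l) 0 0 * (x * wordMatrix (y :: l) 0 0 + 2 * wordMatrix (y :: l) 0 1) := by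
  set T := (palindromicPeriod y l x).length with hT
  set P := wordMatrix (y :: l)
  set M := P * quotientMatrix x * P.transpose * !![0, 1; 1, 0] with hM
  have hpow (j : ℕ) : convergentMatrix e (T * j + 1) = M ^ j * quotientMatrix y := by
    have hsemi := semiconjBy_wordMatrix_palindromicPeriod y l x
    rw [← (hsemi.pow_right j).eq, ← wordMatrix_singleton, ← h.convergentMatrix_eq j, add_comm]
    rfl
  have hstep (j : ℕ) : (convergentMatrix e (T * (j + 1) + 1)).col 0 =
      M.mulVec ((convergentMatrix e (T * j + 1)).col 0) := by
    rw [hpow, hpow, pow_succ', mul_assoc]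
    rfl
  have hTpos : 0 < T := by simp [hT, palindromicPeriod]
  have hfix : β * (M 1 0 * β + M 1 1) = M 0 0 * β + M 0 1 :=
    mul_eq_of_tendsto_div (v := fun j => (convergentMatrix e (T * j + 1)).col 0) hstep
      (fun j => hB (T * j)) (hβ.comp (tendsto_id.const_mul_atTop' hTpos))
  have hMP : M = !![x * P 0 0 * P 1 0 + P 0 1 * P 1 0 + P 0 0 * P 1 1,
      P 0 0 * (x * P 0 0 + 2 * P 0 1);
      P 1 0 * (x * P 1 0 + 2 * P 1 1), x * P 0 0 * P 1 0 + P 0 1 * P 1 0 + P 0 0 * P 1 1] := by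
    ext i j
    fin_cases i <;> fin_cases j <;>
      simp [hM, quotientMatrix, Matrix.mul_apply, Fin.sum_univ_two] <;> ring
  simp only [hMP, Matrix.of_apply, Matrix.cons_val_zero, Matrix.cons_val_one] at hfix
  linear_combination hfix

end Mobius

section Arithmetic

theorem frequently_pow_add_modEq {a N : ℤ} (h : IsCoprime a N) (hN : N ≠ 0) (s w : ℕ) :
    ∃ᶠ k in atTop, a ^ (k + s) ≡ a ^ w [ZMOD N] := by
  have hφ : 0 < N.natAbs.totient := Nat.totient_pos.2 (Int.natAbs_pos.2 hN)
  have hone : a ^ N.natAbs.totient ≡ 1 [ZMOD N] := by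
    have hunit : IsUnit (a : ZMod N.natAbs) := by
      rw [ZMod.coe_int_isUnit_iff_isCoprime, Int.natCast_natAbs]
      exact h.symm.abs_left
    have htot : ((a ^ N.natAbs.totient : ℤ) : ZMod N.natAbs) = (1 : ℤ) := by
      rw [Int.cast_pow, ← hunit.unit_spec, ← Units.val_pow_eq_pow_val, ZMod.pow_totient,
        Units.val_one, Int.cast_one]
    simpa [Int.modEq_iff_dvd] using (ZMod.intCast_eq_intCast_iff _ _ _).1 htot
  refine frequently_atTop.2 fun K => ?_
  have hle : K + s ≤ N.natAbs.totient * (K + s) := Nat.le_mul_of_pos_left _ hφ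
  refine ⟨w + N.natAbs.totient * (K + s) - s, by omega, ?_⟩
  rw [Nat.sub_add_cancel (by omega), pow_add, pow_mul]
  simpa using (Int.ModEq.refl (a ^ w)).mul (hone.pow (K + s))

theorem not_dvd_of_recurrence {R : Type*} [CommRing R] {π : R} (hπ : Prime π) {b c u : ℕ → R}
    (hu₁ : ¬π ∣ u 1) (hu : ∀ n, u (n + 2) = b n * u (n + 1) + c n * u n) {n : ℕ}
    (hb : ∀ i < n, ¬π ∣ b i) (hc : ∀ i < n, π ∣ c i) : ¬π ∣ u (n + 1) := by
  induction n with
  | zero => exact hu₁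
  | succ n ih =>
    rw [hu, dvd_add_left ((hc n n.lt_succ_self).mul_right _)]
    exact hπ.not_dvd_mul (hb n n.lt_succ_self)
      (ih (fun i hi => hb i (hi.trans n.lt_succ_self)) fun i hi => hc i (hi.trans n.lt_succ_self))

theorem niceAt_mul_niceBt_sub (p : ℕ) (ta : ℕ → ℤ) (kk : ℕ → ℕ) (n : ℕ) :
    niceAt p ta kk (n + 1) * niceBt p ta kk n - niceAt p ta kk n * niceBt p ta kk (n + 1) =
      (-1) ^ (n + 1) * (p : ℤ) ^ ∑ i ∈ Finset.range n, (kk (i + 1) + kk i) := by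
  induction n with
  | zero => simp [niceAt, niceBt]
  | succ n ih =>
    rw [niceAt, niceBt, Finset.sum_range_succ, pow_add _ (∑ i ∈ _, _), pow_succ (-1 : ℤ) (n + 1)]
    linear_combination (-(p : ℤ) ^ (kk (n + 1) + kk n)) * ih

theorem convergentMatrix_eq_nice {K : Type*} [Field K] {p : ℕ} (hp : (p : K) ≠ 0) {ta : ℕ → ℤ}
    {kk : ℕ → ℕ} {a : ℕ → K} (ha : ∀ i, a i = ta i / (p : K) ^ kk i) (n : ℕ) :
    convergentMatrix a (n + 1) =
      !![niceAt p ta kk (n + 1) / (p : K) ^ ∑ i ∈ Finset.range (n + 1), kk i,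
          niceAt p ta kk n / (p : K) ^ ∑ i ∈ Finset.range n, kk i;
        (p : K) ^ kk 0 * niceBt p ta kk (n + 1) / (p : K) ^ ∑ i ∈ Finset.range (n + 1), kk i,
          (p : K) ^ kk 0 * niceBt p ta kk n / (p : K) ^ ∑ i ∈ Finset.range n, kk i] := by
  induction n with
  | zero => simp [convergentMatrix, wordMatrix_singleton, quotientMatrix, ha, niceAt, niceBt, hp]
  | succ n ih =>
    rw [convergentMatrix_succ, ih, quotientMatrix, niceAt, niceBt, ha,
      Finset.sum_range_succ _ (n + 1), Finset.sum_range_succ _ n]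
    ext i j
    fin_cases i <;> fin_cases j <;> simp [Matrix.mul_apply, pow_add] <;> field_simp

theorem exists_mul_add_eq_neg_and_mul_eq {R : Type*} [CommRing R] [IsDomain R]
    {A A' B B' Q d : R} (hA : A ≠ 0) (hAB : IsCoprime A B) (hd : d ∣ B)
    (hdvd : A ^ 2 ∣ B * d - Q * (A * B' - A' * B)) :
    ∃ c m, c * A + Q * A' = -d ∧ A * (c * A + Q * A') * m = B * (c * B + Q * B') := by
  obtain ⟨f, hf⟩ := hd
  obtain ⟨g, hg⟩ := hdvd
  obtain ⟨c, hc⟩ : A ∣ -d - Q * A' := by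
    refine hAB.dvd_of_dvd_mul_left ⟨-(A * g) - Q * B', ?_⟩
    linear_combination -hg
  have hB : c * B + Q * B' = -(A * g) := by
    apply mul_left_cancel₀ hA
    linear_combination -B * hc - hg
  refine ⟨c, f * g, by linear_combination -hc, ?_⟩
  rw [hB]
  linear_combination A * f * g * (-hc) + A * g * hf

end Arithmetic

section Valuation

variable {p : ℕ} [Fact p.Prime]

theorem padicValRat_intCast_div_pow {z : ℤ} (hz : ¬(p : ℤ) ∣ z) (k : ℕ) :
    padicValRat p (z / (p : ℚ) ^ k) = -k := by
  have hp : p.Prime := Fact.out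
  have hz₀ : (z : ℚ) ≠ 0 := by
    intro h
    simp_all
  rw [padicValRat.div hz₀ (pow_ne_zero k (by exact_mod_cast hp.ne_zero)), padicValRat.of_int,
    padicValInt.eq_zero_of_not_dvd hz, padicValRat.pow, padicValRat.self hp.one_lt]
  simp

theorem padicValRat_two : padicValRat p 2 = if p = 2 then 1 else 0 := by
  have hval : padicValRat p 2 = padicValNat p 2 := mod_cast padicValRat.of_nat (p := p) (n := 2)
  split_ifs with h
  · subst h
    simp [hval]
  · have := Fact.mk Nat.prime_two
    simp [hval, padicValNat_primes h]

theorem padicValRat_two_mul_intCast_div_pow {z : ℤ} (hz : ¬(p : ℤ) ∣ z) (k : ℕ) :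
    padicValRat p (2 * (z / (p : ℚ) ^ k)) = (if p = 2 then 1 else 0) - k := by
  have hk := padicValRat_intCast_div_pow hz k
  have hne : (z : ℚ) / (p : ℚ) ^ k ≠ 0 := by
    have hp : p.Prime := Fact.out
    have hz₀ : z ≠ 0 := by rintro rfl; simp at hz
    simp [hp.ne_zero, hz₀]
  rw [padicValRat.mul two_ne_zero hne, padicValRat_two, hk, sub_eq_add_neg]

theorem padicValRat_two_mul_neg {z : ℤ} (hz : ¬(p : ℤ) ∣ z) {k : ℕ} (hk : 1 ≤ k)
    (hlt : |(z : ℚ)| / (p : ℚ) ^ k < p / 4) : padicValRat p (2 * (z / (p : ℚ) ^ k)) < 0 := by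
  rw [padicValRat_two_mul_intCast_div_pow hz]
  split_ifs with hp
  · suffices k ≠ 1 by omega
    rintro rfl
    have hz₁ : (1 : ℚ) ≤ |(z : ℚ)| := by
      rw [← Int.cast_abs]
      exact_mod_cast Int.one_le_abs (by rintro rfl; simp at hz)
    rw [hp] at hlt
    norm_num at hlt
    linarith
  · omega

theorem natCast_le_norm_of_padicValRat_neg {x : ℚ} (hx : padicValRat p x < 0) :
    (p : ℝ) ≤ ‖(x : ℚ_[p])‖ := by
  have hx₀ : (x : ℚ_[p]) ≠ 0 := by
    intro h
    simp_all
  rw [Padic.norm_eq_zpow_neg_valuation hx₀, Padic.valuation_ratCast]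
  have hp : (1 : ℝ) ≤ p := mod_cast (Fact.out : p.Prime).one_le
  simpa using zpow_le_zpow_right₀ hp (show (1 : ℤ) ≤ -padicValRat p x by omega)

end Valuation

section Nice

variable {p t n : ℕ} {ta : ℕ → ℤ} {kk : ℕ → ℕ}

/-- The condition on integers `c`, `m` under which completing `(a_0, …, a_n)` by the partial
quotient `2c / p ^ k` gives a continued fraction with limit `±1 / (p ^ k_0 √m)`; it is
`IsPeriodicExpansion.mul_sq_eq` with denominators cleared, for `Ã_n`, `Ã_{n-1}`, `B̃_n`, `B̃_{n-1}`
in the indexing of `niceAt` and `niceBt`. -/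
def IsCompletion (p n : ℕ) (ta : ℕ → ℤ) (kk : ℕ → ℕ) (k : ℕ) (c m : ℤ) : Prop :=
  niceAt p ta kk (n + 1) *
      (c * niceAt p ta kk (n + 1) + (p : ℤ) ^ (k + kk n) * niceAt p ta kk n) ≠ 0 ∧
    niceAt p ta kk (n + 1) *
        (c * niceAt p ta kk (n + 1) + (p : ℤ) ^ (k + kk n) * niceAt p ta kk n) * m =
      niceBt p ta kk (n + 1) *
        (c * niceBt p ta kk (n + 1) + (p : ℤ) ^ (k + kk n) * niceBt p ta kk n)

namespace IsNiceBCF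

theorem one_le_exponent (h : IsNiceBCF p t ta kk) {i : ℕ} (hi : i < t) : 1 ≤ kk i :=
  (h.2.1 i hi).1

theorem not_dvd_numerator (h : IsNiceBCF p t ta kk) {i : ℕ} (hi : i < t) : ¬(p : ℤ) ∣ ta i :=
  (h.2.1 i hi).2.1

theorem dvd_pow_exponent_add (h : IsNiceBCF p t ta kk) {i : ℕ} (hi : i < t) (j : ℕ) :
    (p : ℤ) ∣ (p : ℤ) ^ (kk j + kk i) :=
  dvd_pow_self _ (by have := h.one_le_exponent hi; omega)

variable [Fact p.Prime]

theorem not_dvd_niceAt (h : IsNiceBCF p (n + 1) ta kk) : ¬(p : ℤ) ∣ niceAt p ta kk (n + 1) :=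
  not_dvd_of_recurrence (u := niceAt p ta kk) (Nat.prime_iff_prime_int.1 Fact.out)
    (h.not_dvd_numerator n.succ_pos) (fun _ => by rw [niceAt])
    (fun _ hi => h.not_dvd_numerator (by omega)) fun _ hi => h.dvd_pow_exponent_add (by omega) _

theorem not_dvd_niceBt (h : IsNiceBCF p (n + 1) ta kk) : ¬(p : ℤ) ∣ niceBt p ta kk (n + 1) :=
  have hp : Prime (p : ℤ) := Nat.prime_iff_prime_int.1 Fact.out
  not_dvd_of_recurrence (u := niceBt p ta kk) hp hp.not_dvd_one (fun _ => by rw [niceBt])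
    (fun _ hi => h.not_dvd_numerator (by omega)) fun _ hi => h.dvd_pow_exponent_add (by omega) _

theorem niceAt_ne_zero (h : IsNiceBCF p (n + 1) ta kk) : niceAt p ta kk (n + 1) ≠ 0 :=
  fun h₀ => h.not_dvd_niceAt (h₀ ▸ dvd_zero _)

theorem niceBt_ne_zero (h : IsNiceBCF p (n + 1) ta kk) : niceBt p ta kk (n + 1) ≠ 0 :=
  fun h₀ => h.not_dvd_niceBt (h₀ ▸ dvd_zero _)

theorem isCoprime_prime_niceAt (h : IsNiceBCF p (n + 1) ta kk) :
    IsCoprime (p : ℤ) (niceAt p ta kk (n + 1)) :=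
  (Nat.prime_iff_prime_int.1 Fact.out).irreducible.coprime_iff_not_dvd.2 h.not_dvd_niceAt

theorem isCoprime_niceAt_niceBt (h : IsNiceBCF p (n + 1) ta kk) :
    IsCoprime (niceAt p ta kk (n + 1)) (niceBt p ta kk (n + 1)) := by
  have hdet : IsCoprime (niceAt p ta kk (n + 1)) (niceAt p ta kk (n + 1) * niceBt p ta kk n -
      niceAt p ta kk n * niceBt p ta kk (n + 1)) := by
    rw [niceAt_mul_niceBt_sub, isCoprime_mul_unit_left_right (isUnit_one.neg.pow _)]
    exact h.isCoprime_prime_niceAt.symm.pow_right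
  exact (IsCoprime.mul_sub_left_right_iff.1 hdet).of_mul_right_right

theorem abs_mul_niceAt_div_lt (h : IsNiceBCF p (n + 1) ta kk) :
    |(p : ℚ) ^ kk n * niceAt p ta kk n / niceAt p ta kk (n + 1)| < p / 4 := by
  have hp : 0 < (4 / p : ℚ) := by
    have := (Fact.out : p.Prime).pos
    positivity
  have hinv := inv_strictAnti₀ hp h.2.2.2.1
  rwa [← abs_inv, inv_div, inv_div] at hinv

theorem exists_dvd_niceBt_frequently (h : IsNiceBCF p (n + 1) ta kk) :
    ∃ d, d ∣ niceBt p ta kk (n + 1) ∧ ∃ᶠ k in atTop,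
      niceAt p ta kk (n + 1) ^ 2 ∣ niceBt p ta kk (n + 1) * d - (p : ℤ) ^ (k + kk n) *
        (niceAt p ta kk (n + 1) * niceBt p ta kk n -
          niceAt p ta kk n * niceBt p ta kk (n + 1)) := by
  obtain ⟨_, ω, ⟨d, rfl⟩, hq, hω⟩ := h.2.2.2.2
  rw [sq, mul_dvd_mul_iff_left h.niceBt_ne_zero] at hq
  refine ⟨(-1) ^ (n + 1) * d, (isUnit_one.neg.pow _).mul_left_dvd.2 hq, ?_⟩
  refine (frequently_pow_add_modEq h.isCoprime_prime_niceAt.pow_right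
    (pow_ne_zero 2 h.niceAt_ne_zero) (kk n + ∑ i ∈ Finset.range n, (kk (i + 1) + kk i)) ω).mono
    fun k hk => ?_
  rw [niceAt_mul_niceBt_sub]
  obtain ⟨f, hf⟩ := (hk.trans hω.symm).dvd
  refine ⟨(-1) ^ (n + 1) * f, ?_⟩
  linear_combination (-1) ^ (n + 1) * hf

theorem eventually_abs_div_pow_lt (h : IsNiceBCF p (n + 1) ta kk) (d : ℤ) :
    ∀ᶠ k in atTop, ∀ c : ℤ,
      c * niceAt p ta kk (n + 1) + (p : ℤ) ^ (k + kk n) * niceAt p ta kk n = d →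
        |(c : ℚ) / (p : ℚ) ^ k| < p / 4 := by
  have hp₁ : (1 : ℚ) < p := mod_cast (Fact.out : p.Prime).one_lt
  have htend : Tendsto (fun k => |(d / niceAt p ta kk (n + 1) : ℚ) * (p : ℚ)⁻¹ ^ k -
      (p : ℚ) ^ kk n * niceAt p ta kk n / niceAt p ta kk (n + 1)|) atTop
      (𝓝 |(p : ℚ) ^ kk n * niceAt p ta kk n / niceAt p ta kk (n + 1)|) := by
    have hpow := tendsto_pow_atTop_nhds_zero_of_lt_one
      (by positivity : 0 ≤ (p : ℚ)⁻¹) (inv_lt_one_of_one_lt₀ hp₁)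
    simpa using ((hpow.const_mul _).sub_const _).abs
  filter_upwards [htend.eventually_lt_const h.abs_mul_niceAt_div_lt] with k hk c hc
  have hA : (niceAt p ta kk (n + 1) : ℚ) ≠ 0 := mod_cast h.niceAt_ne_zero
  have hck : (c : ℚ) / (p : ℚ) ^ k = d / niceAt p ta kk (n + 1) * (p : ℚ)⁻¹ ^ k -
      (p : ℚ) ^ kk n * niceAt p ta kk n / niceAt p ta kk (n + 1) := by
    rw [← hc, inv_pow]
    push_cast
    field_simp
    ring
  rwa [hck]

theorem exists_isCompletion (h : IsNiceBCF p (n + 1) ta kk) (K : ℕ) :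
    ∃ (k : ℕ) (c m : ℤ), K ≤ k ∧ ¬(p : ℤ) ∣ c ∧ ¬(p : ℤ) ∣ m ∧
      |(c : ℚ) / (p : ℚ) ^ k| < p / 4 ∧ IsCompletion p n ta kk k c m := by
  have hp : Prime (p : ℤ) := Nat.prime_iff_prime_int.1 Fact.out
  obtain ⟨d, hd, hfreq⟩ := h.exists_dvd_niceBt_frequently
  obtain ⟨k, hdvd, hsize, hK⟩ := (hfreq.and_eventually
    ((h.eventually_abs_div_pow_lt (-d)).and (eventually_ge_atTop K))).exists
  obtain ⟨c, m, hc, hm⟩ :=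
    exists_mul_add_eq_neg_and_mul_eq h.niceAt_ne_zero h.isCoprime_niceAt_niceBt hd hdvd
  have hpQ : (p : ℤ) ∣ (p : ℤ) ^ (k + kk n) :=
    dvd_pow_self _ (by have := h.one_le_exponent n.lt_succ_self; omega)
  have hpd : ¬(p : ℤ) ∣ d := fun hpd => h.not_dvd_niceBt (hpd.trans hd)
  have hpc : ¬(p : ℤ) ∣ c := by
    refine fun hpc => hpd ?_
    rw [← dvd_neg, ← hc]
    exact (hpc.mul_right _).add (hpQ.mul_right _)
  refine ⟨k, c, m, hK, hpc, fun hpm => ?_, hsize c hc, ?_, hm⟩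
  · have hdvd_rhs := hm ▸ hpm.mul_left _
    refine hp.not_dvd_mul h.not_dvd_niceBt (fun hdvd' => ?_) hdvd_rhs
    exact hp.not_dvd_mul hpc h.not_dvd_niceBt ((dvd_add_left (hpQ.mul_right _)).1 hdvd')
  · rw [hc]
    refine mul_ne_zero h.niceAt_ne_zero (neg_ne_zero.2 ?_)
    exact fun hd₀ => hpd (hd₀ ▸ dvd_zero _)

end IsNiceBCF

end Nice

section Completion

theorem isPeriodicExpansion_palindromicPeriod {R : Type*} [CommRing R] {t : ℕ} (ht : 1 ≤ t)
    {a e : ℕ → R} {x : R} (h₀ : e 0 = a 0)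
    (h : ∀ j : ℕ, ∀ i < 2 * t,
      (i < t - 1 → e (1 + 2 * t * j + i) = a (i + 1)) ∧
      (i = t - 1 → e (1 + 2 * t * j + i) = x) ∧
      (t - 1 < i → i < 2 * t - 1 → e (1 + 2 * t * j + i) = a (2 * t - 1 - i)) ∧
      (i = 2 * t - 1 → e (1 + 2 * t * j + i) = 2 * a 0)) :
    IsPeriodicExpansion [a 0]
      (palindromicPeriod (a 0) ((List.range (t - 1)).map fun i => a (i + 1)) x) e := by
  have hlen : (palindromicPeriod (a 0) ((List.range (t - 1)).map fun i => a (i + 1)) x).length =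
      2 * t := by
    simp only [palindromicPeriod, List.length_append, List.length_map, List.length_range,
      List.length_cons, List.length_reverse, List.length_nil]
    omega
  refine ⟨by simp [h₀], fun j => List.ext_getElem (by simp) fun i hi _ => ?_⟩
  rw [List.length_map, List.length_range, hlen] at hi
  obtain ⟨hleft, hmid, hright, hlast⟩ := h j i hi
  simp only [hlen, List.length_singleton, List.getElem_map, List.getElem_range]
  rcases lt_trichotomy i (t - 1) with hlt | rfl | hgt
  · simp [palindromicPeriod, hlt, hleft hlt]
  · simp [palindromicPeriod, hmid rfl]
  · obtain ⟨s, rfl⟩ : ∃ s, i = t - 1 + (s + 1) := ⟨i - t, by omega⟩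
    rcases (show s < t - 1 ∨ s = t - 1 by omega) with hs | rfl
    · have hindex : 2 * t - 1 - (t - 1 + (s + 1)) = t - 1 - 1 - s + 1 := by omega
      rw [hright (by omega) (by omega), hindex]
      simp [palindromicPeriod, hs]
    · simp [palindromicPeriod, hlast (by omega)]

theorem IsPeriodicExpansion.pow_mul_mul_sq_eq_one {K : Type*} [Field K] [CharZero K]
    [TopologicalSpace K] [IsTopologicalRing K] [T2Space K] {p : ℕ} (hp : p ≠ 0)
    {ta : ℕ → ℤ} {kk : ℕ → ℕ} {a e : ℕ → K} (ha : ∀ i, a i = ta i / (p : K) ^ kk i)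
    {n k : ℕ} {c m : ℤ} {β : K}
    (h : IsPeriodicExpansion [a 0] (palindromicPeriod (a 0)
      ((List.range n).map fun i => a (i + 1)) (2 * (c / (p : K) ^ k))) e)
    (hcm : IsCompletion p n ta kk k c m)
    (hB : ∀ n, convergentMatrix e (n + 1) 1 0 ≠ 0) (hβ : Tendsto (convergent e) atTop (𝓝 β)) :
    (p : K) ^ (2 * kk 0) * m * β ^ 2 = 1 := by
  have hp₀ : (p : K) ≠ 0 := mod_cast hp
  have hsq := h.mul_sq_eq hB hβ
  have hword : wordMatrix (a 0 :: (List.range n).map fun i => a (i + 1)) =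
      convergentMatrix a (n + 1) := by
    simp [convergentMatrix, List.range_succ_eq_map, Function.comp_def]
  rw [hword, convergentMatrix_eq_nice hp₀ ha, Finset.sum_range_succ] at hsq
  simp only [Matrix.of_apply, Matrix.cons_val_zero, Matrix.cons_val_one, pow_add] at hsq
  have hne : (niceAt p ta kk (n + 1) : K) *
      (c * niceAt p ta kk (n + 1) + (p : K) ^ (k + kk n) * niceAt p ta kk n) ≠ 0 := mod_cast hcm.1
  have hm := congrArg (Int.cast : ℤ → K) hcm.2
  push_cast at hm
  apply mul_left_cancel₀ hne
  field_simp at hsq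
  linear_combination hsq + (p : K) ^ (2 * kk 0) * β ^ 2 * hm

theorem isBrowkinDigit_intCast_div_pow {p k : ℕ} {z : ℤ} (h : |(z : ℚ) / (p : ℚ) ^ k| < p / 2) :
    IsBrowkinDigit p (z / (p : ℚ) ^ k) := by
  rw [abs_lt, ← neg_div] at h
  exact ⟨⟨z, k, rfl⟩, h⟩

variable {p t n : ℕ} [Fact p.Prime] {ta : ℕ → ℤ} {kk : ℕ → ℕ} {a : ℕ → ℚ}

theorem IsNiceBCF.padicValRat_neg_of_mem_palindromicPeriod (h : IsNiceBCF p (n + 1) ta kk)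
    (ha : ∀ i, a i = (ta i : ℚ) / (p : ℚ) ^ kk i) {x y : ℚ} (hx : padicValRat p x < 0)
    (hy : y ∈ palindromicPeriod (a 0) ((List.range n).map fun i => a (i + 1)) x) :
    padicValRat p y < 0 := by
  have hdigit {i : ℕ} (hi : i < n) : padicValRat p (a (i + 1)) < 0 := by
    have := h.one_le_exponent (Nat.succ_lt_succ hi)
    rw [ha, padicValRat_intCast_div_pow (h.not_dvd_numerator (Nat.succ_lt_succ hi))]
    exact neg_lt_zero.2 (mod_cast this)
  have hlast : padicValRat p (2 * a 0) < 0 := by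
    rw [ha]
    exact padicValRat_two_mul_neg (h.not_dvd_numerator n.succ_pos) (h.one_le_exponent n.succ_pos)
      h.2.2.1
  simp only [palindromicPeriod, List.mem_append, List.mem_cons, List.mem_reverse, List.mem_map,
    List.mem_range, List.not_mem_nil, or_false] at hy
  rcases hy with ⟨i, hi, rfl⟩ | rfl | ⟨i, hi, rfl⟩ | rfl
  exacts [hdigit hi, hx, hdigit hi, hlast]

theorem IsNiceBCF.exists_tendsto (h : IsNiceBCF p (n + 1) ta kk)
    (ha : ∀ i, a i = (ta i : ℚ) / (p : ℚ) ^ kk i) {k : ℕ} {c m : ℤ}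
    (hcm : IsCompletion p n ta kk k c m) (hval : padicValRat p (2 * (c / (p : ℚ) ^ k)) < 0)
    {e : ℕ → ℚ} (he : IsPeriodicExpansion [a 0] (palindromicPeriod (a 0)
      ((List.range n).map fun i => a (i + 1)) (2 * (c / (p : ℚ) ^ k))) e) :
    ∃ β : ℚ_[p], Tendsto (convergent fun i => (e i : ℚ_[p])) atTop (𝓝 β) ∧
      (p : ℚ_[p]) ^ (2 * kk 0) * m * β ^ 2 = 1 := by
  have hp : p.Prime := Fact.out
  have hp₁ : (1 : ℝ) < p := mod_cast hp.one_lt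
  have hnorm (i : ℕ) : (p : ℝ) ≤ ‖(e (i + 1) : ℚ_[p])‖ := by
    refine natCast_le_norm_of_padicValRat_neg
      (h.padicValRat_neg_of_mem_palindromicPeriod ha hval ?_)
    simpa [add_comm] using he.mem (by simp [palindromicPeriod]) i
  obtain ⟨β, hβ⟩ := exists_tendsto_convergent (e := fun i => (e i : ℚ_[p])) hp₁ hnorm
  have he' : IsPeriodicExpansion [(a 0 : ℚ_[p])] (palindromicPeriod (a 0 : ℚ_[p])
      ((List.range n).map fun i => (a (i + 1) : ℚ_[p])) (2 * (c / (p : ℚ_[p]) ^ k)))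
      (fun i => (e i : ℚ_[p])) := by
    have hmap := he.map (Rat.castHom ℚ_[p])
    rw [map_palindromicPeriod] at hmap
    simpa [Function.comp_def] using hmap
  exact ⟨β, hβ, he'.pow_mul_mul_sq_eq_one (a := fun i => (a i : ℚ_[p])) hp.ne_zero (by simp [ha])
    hcm (convergentMatrix_one_zero_ne_zero fun i => hp₁.trans_le (hnorm i)) hβ⟩

theorem nice_BCF_completion_general (h : IsNiceBCF p t ta kk)
    (ha : ∀ i, a i = (ta i : ℚ) / (p : ℚ) ^ kk i) (M : ℕ) :
    ∃ c : ℚ, IsBrowkinDigit p c ∧ IsBrowkinDigit p (2 * c) ∧ padicValRat p (2 * c) < -(M : ℤ) ∧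
      ∃ m : ℤ, ¬(p : ℤ) ∣ m ∧ ∀ e : ℕ → ℚ,
        IsPeriodicExpansion [a 0]
          (palindromicPeriod (a 0) ((List.range (t - 1)).map fun i => a (i + 1)) (2 * c)) e →
        ∀ A B : ℤ → ℚ, IsContinuants e A B →
          ∃ β : ℚ_[p], Tendsto (fun n : ℕ => ((A n / B n : ℚ) : ℚ_[p])) atTop (𝓝 β) ∧
            (p : ℚ_[p]) ^ (2 * kk 0) * (m : ℚ_[p]) * β ^ 2 = 1 := by
  obtain ⟨n, rfl⟩ := Nat.exists_eq_add_of_le' h.1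
  obtain ⟨k, c, m, hk, hpc, hpm, hsize, hcm⟩ := h.exists_isCompletion (M + 2)
  have hval : padicValRat p (2 * (c / (p : ℚ) ^ k)) < -(M : ℤ) := by
    rw [padicValRat_two_mul_intCast_div_pow hpc]
    split_ifs <;> omega
  have hsize' : |2 * (c / (p : ℚ) ^ k)| < p / 2 := by
    rw [abs_mul, abs_two]
    linarith
  refine ⟨c / (p : ℚ) ^ k, isBrowkinDigit_intCast_div_pow (hsize.trans_le ?_), ?_, hval, m, hpm,
    fun e he A B hAB => ?_⟩
  · linarith [Nat.cast_nonneg (α := ℚ) p]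
  · have hcast : (2 * (c / (p : ℚ) ^ k) : ℚ) = (2 * c : ℤ) / (p : ℚ) ^ k := by
      push_cast
      ring
    rw [hcast] at hsize' ⊢
    exact isBrowkinDigit_intCast_div_pow hsize'
  · simpa only [hAB.cast_div_eq_convergent] using h.exists_tendsto ha hcm (by omega) he

end Completion

/-- every nice BCF `(a_0, …, a_{t−1})` can be completed, with
`a_t = 2c` for some `c ∈ 𝒴` of arbitrarily negative `p`-adic valuation, to an
eventually periodic continued fraction
`[a_0; period (a_1, …, a_{t−1}, a_t, a_{t−1}, …, a_1, 2a_0)]` whose convergents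
tend `p`-adically to a limit `β` with `p^{2k_0}·m·β² = 1` for some integer `m`
prime to `p`; i.e. `β = 1/(p^{k_0}·√m)` in `ℚ_p`. -/
theorem nice_BCF_completion
    (p : ℕ) [Fact p.Prime] (hp : Odd p) (t : ℕ)
    (ta : ℕ → ℤ) (kk : ℕ → ℕ) (hnice : IsNiceBCF p t ta kk)
    (a : ℕ → ℚ) (ha : ∀ i, a i = (ta i : ℚ) / (p : ℚ) ^ (kk i))
    (M : ℕ) :
    ∃ c : ℚ, IsBrowkinDigit p c ∧ IsBrowkinDigit p (2 * c) ∧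
      padicValRat p (2 * c) < -(M : ℤ) ∧
      ∃ m : ℤ, ¬((p : ℤ) ∣ m) ∧
        ∀ e : ℕ → ℚ,
          e 0 = a 0 →
          (∀ j : ℕ, ∀ i < 2 * t,
            (i < t - 1 → e (1 + 2 * t * j + i) = a (i + 1)) ∧
            (i = t - 1 → e (1 + 2 * t * j + i) = 2 * c) ∧
            (t - 1 < i → i < 2 * t - 1 → e (1 + 2 * t * j + i) = a (2 * t - 1 - i)) ∧
            (i = 2 * t - 1 → e (1 + 2 * t * j + i) = 2 * a 0)) →
          ∀ A B : ℤ → ℚ, IsContinuants e A B →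
            ∃ β : ℚ_[p],
              Filter.Tendsto (fun nn : ℕ => ((A nn / B nn : ℚ) : ℚ_[p]))
                Filter.atTop (nhds β) ∧
              (p : ℚ_[p]) ^ (2 * kk 0) * (m : ℚ_[p]) * β ^ 2 = 1 := by
  obtain ⟨c, hc, h2c, hval, m, hm, hlim⟩ := nice_BCF_completion_general hnice ha M
  exact ⟨c, hc, h2c, hval, m, hm, fun e h₀ hper =>
    hlim e (isPeriodicExpansion_palindromicPeriod hnice.1 h₀ hper)⟩
end

section
/- Let p ≥ 3 be a prime and t ≥ 2 an integer. Consider the infinite eventually periodic continued fraction with partial quotients a_0 = (p²−1)/(2p) and, for every j ≥ 0, a_{4j+1} = −2/p, a_{4j+2} = −1/p^{t−1}, a_{4j+3} = 2/p, a_{4j+4} = −1/p. Then the convergents A_n/B_n of this continued fraction converge in ℚ_p to a limit β satisfying 4p²·β² = 1 − p^{t+2}; that is, β = ±√(1−p^{t+2})/(2p) for a square root of 1 − p^{t+2} in ℚ_p. -/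
open Bornology Filter Topology

/-- The three-term recurrence satisfied by the numerators and by the denominators of a continued
fraction with partial quotients `a`. The index is shifted by one so as to start at `0`: the
numerators `A` and denominators `B` are the solutions `x n = A (n - 1)` and `x n = B (n - 1)`. -/
def IsContinuantSeq {R : Type*} [Semiring R] (a x : ℕ → R) : Prop :=
  ∀ n, x (n + 2) = a (n + 1) * x (n + 1) + x n

/-- The vectors `(F n, G n)` and `(F (n + 1), G (n + 1))` have Gram matrix `!![s, m; m, s']` with
respect to the quadratic form `e * x ^ 2 - d * y ^ 2`. -/
structure HasConsecutiveGram {R : Type*} [CommRing R] (e d : R) (F G : ℕ → R) (n : ℕ)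
    (s m s' : R) : Prop where
  left : e * F n ^ 2 - d * G n ^ 2 = s
  cross : e * (F n * F (n + 1)) - d * (G n * G (n + 1)) = m
  right : e * F (n + 1) ^ 2 - d * G (n + 1) ^ 2 = s'

theorem isContinuantSeq_ratCast {K : Type*} [DivisionRing K] [CharZero K] {a : ℕ → ℚ} {x : ℤ → ℚ}
    (hx : ∀ n : ℕ, 1 ≤ n → x n = a n * x ((n : ℤ) - 1) + x ((n : ℤ) - 2)) :
    IsContinuantSeq (fun n => (a n : K)) fun n => (x ((n : ℤ) - 1) : K) := by
  intro n
  have h := hx (n + 1) n.succ_pos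
  push_cast at h ⊢
  rw [show (n : ℤ) + 2 - 1 = n + 1 by ring, h, show (n : ℤ) + 1 - 2 = n - 1 by ring]
  push_cast
  rfl

namespace IsContinuantSeq

section CommRing

variable {R : Type*} [CommRing R] {a F G : ℕ → R}

theorem determinant (hF : IsContinuantSeq a F) (hG : IsContinuantSeq a G) (n : ℕ) :
    F (n + 1) * G n - F n * G (n + 1) = (-1) ^ n * (F 1 * G 0 - F 0 * G 1) := by
  induction n with
  | zero => simp
  | succ n ih =>
    rw [hF n, hG n]
    linear_combination -ih

theorem hasConsecutiveGram_succ (hF : IsContinuantSeq a F) (hG : IsContinuantSeq a G)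
    {e d s m s' : R} {n : ℕ} (h : HasConsecutiveGram e d F G n s m s') :
    HasConsecutiveGram e d F G (n + 1) s' (a (n + 1) * s' + m)
      (a (n + 1) ^ 2 * s' + 2 * a (n + 1) * m + s) where
  left := h.right
  cross := by
    rw [hF n, hG n]
    linear_combination a (n + 1) * h.right + h.cross
  right := by
    rw [hF n, hG n]
    linear_combination a (n + 1) ^ 2 * h.right + 2 * a (n + 1) * h.cross + h.left

end CommRing

section Ultrametric

variable {K : Type*} [NormedField K] [IsUltrametricDist K] {a x F G : ℕ → K}

theorem norm_add_two (hx : IsContinuantSeq a x) {n : ℕ} (h : ‖x n‖ < ‖a (n + 1) * x (n + 1)‖) :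
    ‖x (n + 2)‖ = ‖a (n + 1) * x (n + 1)‖ := by
  rw [hx n, IsUltrametricDist.norm_add_eq_max_of_norm_ne_norm h.ne', max_eq_left h.le]

theorem norm_lt_norm_mul (hx : IsContinuantSeq a x) (ha : ∀ n, 1 < ‖a (n + 1) * a (n + 2)‖)
    (h0 : ‖x 0‖ < ‖a 1 * x 1‖) (n : ℕ) : ‖x n‖ < ‖a (n + 1) * x (n + 1)‖ := by
  induction n with
  | zero => exact h0
  | succ n ih =>
    have hpos : 0 < ‖x (n + 1)‖ :=
      norm_pos_iff.2 (right_ne_zero_of_mul (norm_pos_iff.1 ((norm_nonneg _).trans_lt ih)))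
    calc
      ‖x (n + 1)‖ < ‖a (n + 1) * a (n + 2)‖ * ‖x (n + 1)‖ := lt_mul_of_one_lt_left hpos (ha n)
      _ = ‖a (n + 2)‖ * ‖a (n + 1) * x (n + 1)‖ := by simp only [norm_mul]; ring
      _ = ‖a (n + 2) * x (n + 2)‖ := by rw [← hx.norm_add_two ih, norm_mul]

theorem tendsto_mul_succ_cobounded (hx : IsContinuantSeq a x) {c : ℝ} (hc : 1 < c)
    (ha : ∀ n, c ≤ ‖a (n + 1) * a (n + 2)‖) (h0 : ‖x 0‖ < ‖a 1 * x 1‖) :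
    Tendsto (fun n => x n * x (n + 1)) atTop (cobounded K) := by
  have hlt := hx.norm_lt_norm_mul (fun n => hc.trans_le (ha n)) h0
  have hne (n : ℕ) : x (n + 1) ≠ 0 :=
    right_ne_zero_of_mul (norm_pos_iff.1 ((norm_nonneg _).trans_lt (hlt n)))
  rw [← tendsto_norm_atTop_iff_cobounded, ← tendsto_add_atTop_iff_nat 1]
  refine tendsto_atTop_of_geom_le (norm_pos_iff.2 (mul_ne_zero (hne 0) (hne 1))) hc fun n => ?_
  calc
    c * ‖x (n + 1) * x (n + 2)‖
      ≤ ‖a (n + 1) * a (n + 2)‖ * ‖x (n + 1) * x (n + 2)‖ := by gcongr; exact ha n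
    _ = ‖a (n + 1) * x (n + 1)‖ * ‖a (n + 2) * x (n + 2)‖ := by simp only [norm_mul]; ring
    _ = ‖x (n + 2) * x (n + 3)‖ := by
      rw [← hx.norm_add_two (hlt n), ← hx.norm_add_two (hlt (n + 1)), norm_mul]

theorem exists_tendsto_div [CompleteSpace K] (hF : IsContinuantSeq a F) (hG : IsContinuantSeq a G)
    (hGG : Tendsto (fun n => G n * G (n + 1)) atTop (cobounded K)) :
    ∃ β, Tendsto (fun n => F n / G n) atTop (𝓝 β) := by
  refine cauchySeq_tendsto_of_complete
    (NonarchimedeanAddGroup.cauchySeq_of_tendsto_sub_nhds_zero ?_)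
  rw [tendsto_zero_iff_norm_tendsto_zero]
  have hlim : Tendsto (fun n => ‖F 1 * G 0 - F 0 * G 1‖ * ‖(G n * G (n + 1))⁻¹‖) atTop (𝓝 0) := by
    simpa using (tendsto_inv₀_cobounded.comp hGG).norm.const_mul ‖F 1 * G 0 - F 0 * G 1‖
  refine hlim.congr' ?_
  filter_upwards [hGG.eventually_ne_cobounded 0] with n hn
  rw [div_sub_div _ _ (right_ne_zero_of_mul hn) (left_ne_zero_of_mul hn),
    mul_comm (G (n + 1)) (F n), hF.determinant hG n, div_eq_mul_inv, mul_comm (G (n + 1))]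
  simp only [norm_mul, norm_pow, norm_neg, norm_one, one_pow, one_mul]

end Ultrametric

end IsContinuantSeq

theorem mul_sq_eq_of_tendsto_div_of_cross_eq {K : Type*} [NormedField K] {e d m β : K}
    {F G : ℕ → K} {φ : ℕ → ℕ} (hφ : Tendsto φ atTop atTop)
    (hβ : Tendsto (fun n => F n / G n) atTop (𝓝 β))
    (hGG : Tendsto (fun n => G n * G (n + 1)) atTop (cobounded K))
    (hm : ∀ j, e * (F (φ j) * F (φ j + 1)) - d * (G (φ j) * G (φ j + 1)) = m) :
    e * β ^ 2 = d := by
  have hlim : Tendsto (fun n => e * (F n / G n * (F (n + 1) / G (n + 1)))) atTop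
      (𝓝 (e * β ^ 2)) := by
    rw [sq]
    exact (hβ.mul ((tendsto_add_atTop_iff_nat 1).2 hβ)).const_mul e
  have hlim' : Tendsto (fun j => d + m * (G (φ j) * G (φ j + 1))⁻¹) atTop (𝓝 d) := by
    simpa using ((tendsto_inv₀_cobounded.comp (hGG.comp hφ)).const_mul m).const_add d
  refine tendsto_nhds_unique (hlim.comp hφ) (hlim'.congr' ?_)
  filter_upwards [(hGG.comp hφ).eventually_ne_cobounded 0] with j hj
  have hG : G (φ j) ≠ 0 := left_ne_zero_of_mul hj
  have hG' : G (φ j + 1) ≠ 0 := right_ne_zero_of_mul hj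
  simp only [Function.comp_apply, ← hm j]
  field_simp
  ring

/-- The partial quotients of index at least `1` are `-2/r, -1/q, 2/r, -1/r`, repeated with period
four; the value `a 0` is left free. The continued fraction of the paper has `r = p` and
`q = p ^ (t - 1)`. -/
def HasPeriodicQuotients {K : Type*} [Field K] (r q : K) (a : ℕ → K) : Prop :=
  ∀ j, a (4 * j + 1) = -2 / r ∧ a (4 * j + 2) = -1 / q ∧ a (4 * j + 3) = 2 / r ∧
    a (4 * j + 4) = -1 / r

namespace HasPeriodicQuotients

section Field

variable {K : Type*} [Field K] {r q : K} {a F G : ℕ → K}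

theorem hasConsecutiveGram_add_four (ha : HasPeriodicQuotients r q a) (hr : r ≠ 0) (hq : q ≠ 0)
    (hF : IsContinuantSeq a F) (hG : IsContinuantSeq a G) {e d : K} {j : ℕ}
    (h : HasConsecutiveGram e d F G (4 * j)
      (4 * r ^ 2) (2 * r ^ 3 - 2 * r) (r ^ 4 - 2 * r ^ 2 + r ^ 3 * q)) :
    HasConsecutiveGram e d F G (4 * j + 4)
      (4 * r ^ 2) (2 * r ^ 3 - 2 * r) (r ^ 4 - 2 * r ^ 2 + r ^ 3 * q) := by
  obtain ⟨ha₁, ha₂, ha₃, ha₄⟩ := ha j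
  have h₁ : HasConsecutiveGram e d F G (4 * j + 1)
      (r ^ 4 - 2 * r ^ 2 + r ^ 3 * q) (2 * r - 2 * r ^ 2 * q) (4 * r * q) := by
    convert hF.hasConsecutiveGram_succ hG h using 1 <;> (rw [ha₁]; field_simp; ring)
  have h₂ : HasConsecutiveGram e d F G (4 * j + 2)
      (4 * r * q) (-2 * r - 2 * r ^ 2 * q) (r ^ 4 + 2 * r ^ 2 + r ^ 3 * q) := by
    convert hF.hasConsecutiveGram_succ hG h₁ using 1 <;> (rw [ha₂]; field_simp; ring)
  have h₃ : HasConsecutiveGram e d F G (4 * j + 3)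
      (r ^ 4 + 2 * r ^ 2 + r ^ 3 * q) (2 * r ^ 3 + 2 * r) (4 * r ^ 2) := by
    convert hF.hasConsecutiveGram_succ hG h₂ using 1 <;> (rw [ha₃]; field_simp; ring)
  convert hF.hasConsecutiveGram_succ hG h₃ using 1 <;> (rw [ha₄]; field_simp; ring)

theorem hasConsecutiveGram (ha : HasPeriodicQuotients r q a) (hr : r ≠ 0) (hq : q ≠ 0)
    (h2 : (2 : K) ≠ 0) (hF : IsContinuantSeq a F) (hG : IsContinuantSeq a G) (hF0 : F 0 = 1)
    (hF1 : F 1 = (r ^ 2 - 1) / (2 * r)) (hG0 : G 0 = 0) (hG1 : G 1 = 1) (j : ℕ) :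
    HasConsecutiveGram (4 * r ^ 2) (1 - r ^ 3 * q) F G (4 * j)
      (4 * r ^ 2) (2 * r ^ 3 - 2 * r) (r ^ 4 - 2 * r ^ 2 + r ^ 3 * q) := by
  induction j with
  | zero =>
    constructor <;> simp only [mul_zero, zero_add, hF0, hF1, hG0, hG1] <;> field_simp <;> ring
  | succ j ih => exact ha.hasConsecutiveGram_add_four hr hq hF hG ih

end Field

theorem exists_le_norm_mul_succ {K : Type*} [NormedField K] {r q : K} {a : ℕ → K}
    (ha : HasPeriodicQuotients r q a) (hr : r ≠ 0) (hq : q ≠ 0) (hr2 : ‖r ^ 2‖ < ‖(2 : K)‖)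
    (hrq : ‖r * q‖ < ‖(2 : K)‖) : ∃ c : ℝ, 1 < c ∧ ∀ n, c ≤ ‖a (n + 1) * a (n + 2)‖ := by
  refine ⟨min ‖2 / (r * q)‖ ‖2 / r ^ 2‖, lt_min ?_ ?_, fun n => ?_⟩
  · rwa [norm_div, one_lt_div (norm_pos_iff.2 (mul_ne_zero hr hq))]
  · rwa [norm_div, one_lt_div (norm_pos_iff.2 (pow_ne_zero 2 hr))]
  · obtain ⟨j, rfl | rfl | rfl | rfl⟩ :
        ∃ j, n = 4 * j ∨ n = 4 * j + 1 ∨ n = 4 * j + 2 ∨ n = 4 * j + 3 := ⟨n / 4, by lia⟩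
    all_goals obtain ⟨ha₁, ha₂, ha₃, ha₄⟩ := ha j
    · refine min_le_of_left_le (le_of_eq ?_)
      rw [ha₁, ha₂]
      ring_nf
    · refine min_le_of_left_le (le_of_eq ?_)
      rw [ha₂, ha₃, ← norm_neg]
      ring_nf
    · refine min_le_of_right_le (le_of_eq ?_)
      rw [ha₃, ha₄, ← norm_neg]
      ring_nf
    · refine min_le_of_right_le (le_of_eq ?_)
      have ha₅ : a (4 * j + 5) = -2 / r := (ha (j + 1)).1
      rw [ha₄, ha₅]
      ring_nf

end HasPeriodicQuotients

theorem periodic_cf_sqrt_one_sub_p_pow_general {K : Type*} [NormedField K] [IsUltrametricDist K]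
    [CompleteSpace K] {r q : K} (hr : r ≠ 0) (hq : q ≠ 0) (hr2 : ‖r ^ 2‖ < ‖(2 : K)‖)
    (hrq : ‖r * q‖ < ‖(2 : K)‖) {a F G : ℕ → K} (ha : HasPeriodicQuotients r q a)
    (hF : IsContinuantSeq a F) (hG : IsContinuantSeq a G) (hF0 : F 0 = 1)
    (hF1 : F 1 = (r ^ 2 - 1) / (2 * r)) (hG0 : G 0 = 0) (hG1 : G 1 = 1) :
    ∃ β, Tendsto (fun n => F n / G n) atTop (𝓝 β) ∧ 4 * r ^ 2 * β ^ 2 = 1 - r ^ 3 * q := by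
  have h2 : (2 : K) ≠ 0 := norm_pos_iff.1 ((norm_nonneg _).trans_lt hr2)
  obtain ⟨c, hc, hca⟩ := ha.exists_le_norm_mul_succ hr hq hr2 hrq
  have ha1 : a 1 ≠ 0 := (ha 0).1 ▸ div_ne_zero (neg_ne_zero.2 h2) hr
  have hGG : Tendsto (fun n => G n * G (n + 1)) atTop (cobounded K) :=
    hG.tendsto_mul_succ_cobounded hc hca (by simpa [hG0, hG1] using ha1)
  obtain ⟨β, hβ⟩ := hF.exists_tendsto_div hG hGG
  exact ⟨β, hβ, mul_sq_eq_of_tendsto_div_of_cross_eq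
    (tendsto_id.const_mul_atTop' four_pos) hβ hGG
    fun j => (ha.hasConsecutiveGram hr hq h2 hF hG hF0 hF1 hG0 hG1 j).cross⟩

theorem norm_p_pow_lt_norm_natCast {p : ℕ} [Fact p.Prime] {m n : ℕ} (h : ¬p ^ n ∣ m) :
    ‖(p : ℚ_[p]) ^ n‖ < ‖(m : ℚ_[p])‖ := by
  rw [Padic.norm_p_pow, ← not_le]
  exact_mod_cast (Padic.norm_int_le_pow_iff_dvd (m : ℤ) n).not.2 (by exact_mod_cast h)

theorem norm_p_pow_lt_norm_two {p : ℕ} [hp : Fact p.Prime] {n : ℕ} (hn : 2 ≤ n) :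
    ‖(p : ℚ_[p]) ^ n‖ < ‖(2 : ℚ_[p])‖ := by
  have hlt : 2 < p ^ n := calc
    2 < 2 ^ 2 := by norm_num
    _ ≤ p ^ 2 := Nat.pow_le_pow_left hp.out.two_le 2
    _ ≤ p ^ n := Nat.pow_le_pow_right hp.out.pos hn
  exact_mod_cast norm_p_pow_lt_norm_natCast (Nat.not_dvd_of_pos_of_lt two_pos hlt)

/-- for a prime `p ≥ 3` and `t ≥ 2`, the continued fraction with
partial quotients `a_0 = (p²−1)/(2p)` and, for `j ≥ 0`,
`a_{4j+1} = −2/p`, `a_{4j+2} = −1/p^{t−1}`, `a_{4j+3} = 2/p`, `a_{4j+4} = −1/p`,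
converges in `ℚ_p` to a limit `β` with `4p²·β² = 1 − p^{t+2}`, i.e.
`β = ±√(1−p^{t+2})/(2p)`. -/
theorem periodic_cf_sqrt_one_sub_p_pow
    (p : ℕ) [Fact p.Prime] (hp3 : 3 ≤ p) (t : ℕ) (ht : 2 ≤ t)
    (a : ℕ → ℚ)
    (ha0 : a 0 = ((p : ℚ) ^ 2 - 1) / (2 * p))
    (ha : ∀ j : ℕ, a (4 * j + 1) = -2 / (p : ℚ) ∧
      a (4 * j + 2) = -1 / (p : ℚ) ^ (t - 1) ∧
      a (4 * j + 3) = 2 / (p : ℚ) ∧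
      a (4 * j + 4) = -1 / (p : ℚ))
    (A B : ℤ → ℚ) (hAB : IsContinuants a A B) :
    ∃ β : ℚ_[p],
      Filter.Tendsto (fun n : ℕ => ((A n / B n : ℚ) : ℚ_[p]))
        Filter.atTop (nhds β) ∧
      4 * (p : ℚ_[p]) ^ 2 * β ^ 2 = 1 - (p : ℚ_[p]) ^ (t + 2) := by
  obtain ⟨hA1, hA0, hB1, hB0, hrec⟩ := hAB
  have hp : (p : ℚ_[p]) ≠ 0 := NeZero.ne _
  have hpt : (p : ℚ_[p]) * p ^ (t - 1) = p ^ t := mul_pow_sub_one (by lia) _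
  have hper : HasPeriodicQuotients (p : ℚ_[p]) (p ^ (t - 1)) fun n => (a n : ℚ_[p]) := by
    intro j
    simp [ha j]
  obtain ⟨β, hβ, hsq⟩ := periodic_cf_sqrt_one_sub_p_pow_general hp (pow_ne_zero _ hp)
    (norm_p_pow_lt_norm_two le_rfl) (hpt ▸ norm_p_pow_lt_norm_two ht) hper
    (isContinuantSeq_ratCast fun n hn => (hrec n hn).1)
    (isContinuantSeq_ratCast fun n hn => (hrec n hn).2)
    (by simp [hA1]) (by simp [hA0, ha0]) (by simp [hB1]) (by simp [hB0])
  refine ⟨β, ((tendsto_add_atTop_iff_nat 1).2 hβ).congr fun n => by simp, ?_⟩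
  rw [hsq, pow_add, ← hpt]
  ring
end
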